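/- For every integer t with 1 ≤ t ≤ 6 and every 3-graph F, the number (t/6)·Λ_F belongs to Π^(3)_{▽,∞}, i.e., there exists a family ℱ of 3-graphs with π_▽(ℱ) = (t/6)·Λ_F. -/

import Mathlib

/-!
A palette `P` on a finite colour set `C` is a set of ordered triples of colours. A 3-graph
satisfies `P` if its vertices can be ordered and its pairs coloured so that the pattern
`(uv, vw, uw)` of every edge `u < v < w` lies in `P`. Write `λ_P(x) = ∑_{(a,b,c) ∈ P} x_a x_b x_c`.
Keeping `t` of the six orderings of every edge of `F` gives a palette on the vertices of `F` with
`λ_P = (t/6) λ_F` (`exists_palette`), so it suffices that the family of all 3-graphs not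
satisfying `P` has uniform Turán density `max λ_P` over the simplex (`piVVV_palette`).
Satisfying `P` passes to subhypergraphs, so the 3-graphs free of this family are exactly those
satisfying `P` (`free_iff_sat`).

Upper bound (`density_le`). Let `H` satisfy `P` and be `(d,η,▽)`-dense with `η` tiny. Cut the
ordered vertex set into many consecutive blocks and pass to subsets, of size a constant
proportion, such that between any two blocks the bipartite graph of every colour is regular
(`exists_all_regular`, by a density increment argument). By Ramsey's theorem there are three
blocks `A < B < D` whose three vectors of colour densities nearly agree with a single vector `y`
(`exists_close_triangle`). Counting triangles in regular triples (`triangle_count_le`), the density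
of edges in `A × B × D` is at most `λ_P(y)` up to a small error, and it is at least `d` up to
a small error.

Lower bound (`exists_dense`). Let `x` maximise `λ_P`. Colour the pairs of `{0, …, n-1}`
independently with distribution `x`, and take as edges all triples `u < v < w` with pattern in
`P`. The deviation of each colour from its expected frequency has only `O(n³)` weighted
four-cycles in expectation (`exists_colouring`), hence for some colouring a small cut norm
(`cut_pow_four_le`). Therefore every `X × Y × Z` contains `λ_P(x) |X| |Y| |Z| - o(n³)` edges
(`pattern_count`).
-/

open Finset

/-- A 3-uniform hypergraph: a finite vertex set (of naturals) together with a set of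
3-element subsets of it as edges. -/
structure ThreeGraph where
  verts : Finset ℕ
  edges : Finset (Finset ℕ)
  edge_sub : ∀ e ∈ edges, e ⊆ verts
  edge_card : ∀ e ∈ edges, e.card = 3

/-- `F` occurs as a subhypergraph of `H`. -/
def IsSubhypergraph (F H : ThreeGraph) : Prop :=
  ∃ f : ℕ → ℕ, Set.InjOn f ↑F.verts ∧ (∀ v ∈ F.verts, f v ∈ H.verts) ∧
    ∀ e ∈ F.edges, e.image f ∈ H.edges

noncomputable section

/-- Number of triples `(x,y,z) ∈ X × Y × Z` with `{x,y,z}` an edge of `H`. -/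
def eVVV (H : ThreeGraph) (X Y Z : Finset ℕ) : ℕ :=
  ((X ×ˢ Y ×ˢ Z).filter fun p => ({p.1, p.2.1, p.2.2} : Finset ℕ) ∈ H.edges).card

/-- `H` is `(d,η,▽)`-dense. -/
def IsDenseVVV (H : ThreeGraph) (d η : ℝ) : Prop :=
  ∀ X Y Z : Finset ℕ, X ⊆ H.verts → Y ⊆ H.verts → Z ⊆ H.verts →
    (eVVV H X Y Z : ℝ) ≥ d * X.card * Y.card * Z.card - η * (H.verts.card : ℝ) ^ 3

/-- Number of ordered triples `(x,y,z)` with `x ∈ X`, `{y,z} ∈ P` and `{x,y,z}` an edge. -/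
def eEV (H : ThreeGraph) (X : Finset ℕ) (P : Finset (Finset ℕ)) : ℕ :=
  ((X ×ˢ H.verts ×ˢ H.verts).filter fun p =>
    ({p.2.1, p.2.2} : Finset ℕ) ∈ P ∧ ({p.1, p.2.1, p.2.2} : Finset ℕ) ∈ H.edges).card

/-- `H` is `(d,η,e↦v)`-dense. -/
def IsDenseEV (H : ThreeGraph) (d η : ℝ) : Prop :=
  ∀ (X : Finset ℕ) (P : Finset (Finset ℕ)), X ⊆ H.verts →
    (∀ p ∈ P, p ⊆ H.verts ∧ p.card = 2) →
    (eEV H X P : ℝ) ≥ d * X.card * P.card - η * (H.verts.card : ℝ) ^ 3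

/-- `K_{ee}(P,Q)`: ordered triples `(x,y,z)` with `{x,y} ∈ P` and `{y,z} ∈ Q`. -/
def KEE (H : ThreeGraph) (P Q : Finset (Finset ℕ)) : Finset (ℕ × ℕ × ℕ) :=
  (H.verts ×ˢ H.verts ×ˢ H.verts).filter fun p =>
    ({p.1, p.2.1} : Finset ℕ) ∈ P ∧ ({p.2.1, p.2.2} : Finset ℕ) ∈ Q

/-- Number of triples in `K_{ee}(P,Q)` forming an edge of `H`. -/
def eEE (H : ThreeGraph) (P Q : Finset (Finset ℕ)) : ℕ :=
  ((KEE H P Q).filter fun p => ({p.1, p.2.1, p.2.2} : Finset ℕ) ∈ H.edges).card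

/-- `H` is `(d,η,ee)`-dense. -/
def IsDenseEE (H : ThreeGraph) (d η : ℝ) : Prop :=
  ∀ P Q : Finset (Finset ℕ),
    (∀ p ∈ P, p ⊆ H.verts ∧ p.card = 2) → (∀ q ∈ Q, q ⊆ H.verts ∧ q.card = 2) →
    (eEE H P Q : ℝ) ≥ d * (KEE H P Q).card - η * (H.verts.card : ℝ) ^ 3

/-- The uniform Turán density `π_▽(𝓕)` of a family `𝓕` of 3-graphs. -/
def piVVV (𝓕 : Set ThreeGraph) : ℝ :=
  sSup {d : ℝ | 0 ≤ d ∧ d ≤ 1 ∧ ∀ η : ℝ, 0 < η → ∀ n : ℕ,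
    ∃ H : ThreeGraph, n ≤ H.verts.card ∧ (∀ F ∈ 𝓕, ¬ IsSubhypergraph F H) ∧
      IsDenseVVV H d η}

/-- The uniform Turán density `π_{e↦v}(𝓕)` of a family `𝓕` of 3-graphs. -/
def piEV (𝓕 : Set ThreeGraph) : ℝ :=
  sSup {d : ℝ | 0 ≤ d ∧ d ≤ 1 ∧ ∀ η : ℝ, 0 < η → ∀ n : ℕ,
    ∃ H : ThreeGraph, n ≤ H.verts.card ∧ (∀ F ∈ 𝓕, ¬ IsSubhypergraph F H) ∧
      IsDenseEV H d η}

/-- The uniform Turán density `π_{ee}(𝓕)` of a family `𝓕` of 3-graphs. -/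
def piEE (𝓕 : Set ThreeGraph) : ℝ :=
  sSup {d : ℝ | 0 ≤ d ∧ d ≤ 1 ∧ ∀ η : ℝ, 0 < η → ∀ n : ℕ,
    ∃ H : ThreeGraph, n ≤ H.verts.card ∧ (∀ F ∈ 𝓕, ¬ IsSubhypergraph F H) ∧
      IsDenseEE H d η}

/-- A palette: a finite set of ordered triples of natural numbers (colours). -/
abbrev Palette := Finset (ℕ × ℕ × ℕ)

/-- The set of colours `Φ(𝒫)` of a palette. -/
def palColours (P : Palette) : Finset ℕ :=
  P.image (·.1) ∪ P.image (·.2.1) ∪ P.image (·.2.2)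

/-- A weighting of a palette: nonnegative weights on the colours summing to 1. -/
def IsWeighting (P : Palette) (x : ℕ → ℝ) : Prop :=
  (∀ a ∈ palColours P, 0 ≤ x a) ∧ ∑ a ∈ palColours P, x a = 1

/-- `λ^▽_𝒫(x) = Σ_{(a,b,c) ∈ 𝒫} x_a x_b x_c`. -/
def lamVVV (P : Palette) (x : ℕ → ℝ) : ℝ :=
  ∑ p ∈ P, x p.1 * x p.2.1 * x p.2.2

/-- The palette Lagrangian `Λ^▽_𝒫`. -/
def LambdaVVV (P : Palette) : ℝ :=
  sSup {l : ℝ | ∃ x : ℕ → ℝ, IsWeighting P x ∧ l = lamVVV P x}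

/-- The ordered degree Lagrangian `λ^a_𝒫(x)`. -/
def lamDeg (P : Palette) (a : ℕ) (x : ℕ → ℝ) : ℝ :=
  min (min (∑ p ∈ P.filter (fun p => p.1 = a), x p.2.1 * x p.2.2)
           (∑ p ∈ P.filter (fun p => p.2.1 = a), x p.1 * x p.2.2))
      (∑ p ∈ P.filter (fun p => p.2.2 = a), x p.1 * x p.2.1)

/-- `λ^{e↦v}_𝒫(x)`: minimum of `λ^a_𝒫(x)` over colours `a` with positive weight. -/
def lamEV (P : Palette) (x : ℕ → ℝ) : ℝ :=
  sInf {l : ℝ | ∃ a ∈ palColours P, 0 < x a ∧ l = lamDeg P a x}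

/-- The palette Lagrangian `Λ^{e↦v}_𝒫`. -/
def LambdaEV (P : Palette) : ℝ :=
  sSup {l : ℝ | ∃ x : ℕ → ℝ, IsWeighting P x ∧ l = lamEV P x}

/-- The ordered codegree Lagrangian `λ^{a,b}_𝒫(x)`. -/
def lamCodeg (P : Palette) (a b : ℕ) (x : ℕ → ℝ) : ℝ :=
  min (min (min (∑ p ∈ P.filter (fun p => p.1 = a ∧ p.2.1 = b), x p.2.2)
                (∑ p ∈ P.filter (fun p => p.1 = b ∧ p.2.1 = a), x p.2.2))
           (min (∑ p ∈ P.filter (fun p => p.1 = a ∧ p.2.2 = b), x p.2.1)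
                (∑ p ∈ P.filter (fun p => p.1 = b ∧ p.2.2 = a), x p.2.1)))
      (min (∑ p ∈ P.filter (fun p => p.2.1 = a ∧ p.2.2 = b), x p.1)
           (∑ p ∈ P.filter (fun p => p.2.1 = b ∧ p.2.2 = a), x p.1))

/-- `λ^{ee}_𝒫(x)`: minimum of `λ^{a,b}_𝒫(x)` over colours `a,b` with positive weight. -/
def lamEE (P : Palette) (x : ℕ → ℝ) : ℝ :=
  sInf {l : ℝ | ∃ a ∈ palColours P, ∃ b ∈ palColours P, 0 < x a * x b ∧ l = lamCodeg P a b x}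

/-- The palette Lagrangian `Λ^{ee}_𝒫`. -/
def LambdaEE (P : Palette) : ℝ :=
  sSup {l : ℝ | ∃ x : ℕ → ℝ, IsWeighting P x ∧ l = lamEE P x}

/-- A 3-graph `H` satisfies a palette `P`: there is an ordering of the vertices (an
injection `ord` into `ℕ`) and a colouring `φ` of the pairs of vertices with colours in
`Φ(P)` such that the ordered shadow of every edge is a triple of the palette. -/
def Satisfies (H : ThreeGraph) (P : Palette) : Prop :=
  ∃ (ord : ℕ → ℕ) (φ : Finset ℕ → ℕ),
    Set.InjOn ord ↑H.verts ∧
    (∀ u ∈ H.verts, ∀ v ∈ H.verts, u ≠ v → φ {u, v} ∈ palColours P) ∧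
    ∀ u v w : ℕ, ({u, v, w} : Finset ℕ) ∈ H.edges →
      ord u < ord v → ord v < ord w →
      (φ {u, v}, φ {v, w}, φ {u, w}) ∈ P

/-- Delete a set of edges from a 3-graph. -/
def ThreeGraph.deleteEdges (H : ThreeGraph) (R : Finset (Finset ℕ)) : ThreeGraph where
  verts := H.verts
  edges := H.edges \ R
  edge_sub := fun e he => H.edge_sub e (Finset.mem_sdiff.mp he).1
  edge_card := fun e he => H.edge_card e (Finset.mem_sdiff.mp he).1

/-- `H` α-almost satisfies `P`: one can remove at most `α·|V(H)|³` edges so that the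
resulting 3-graph satisfies `P`. -/
def AlmostSatisfies (H : ThreeGraph) (P : Palette) (α : ℝ) : Prop :=
  ∃ R ⊆ H.edges, (R.card : ℝ) ≤ α * (H.verts.card : ℝ) ^ 3 ∧
    Satisfies (H.deleteEdges R) P

/-- The Lagrange polynomial `λ_F(x) = 3! Σ_{e ∈ E(F)} Π_{v ∈ e} x_v` of a 3-graph. -/
def lagrangePoly (F : ThreeGraph) (x : ℕ → ℝ) : ℝ :=
  6 * ∑ e ∈ F.edges, ∏ v ∈ e, x v

/-- The Lagrangian `Λ_F` of a 3-graph: the supremum of the Lagrange polynomial over the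
standard simplex on the vertices. -/
def lagrangian (F : ThreeGraph) : ℝ :=
  sSup {l : ℝ | ∃ x : ℕ → ℝ, (∀ v ∈ F.verts, 0 ≤ x v ∧ x v ≤ 1) ∧
    (∑ v ∈ F.verts, x v = 1) ∧ l = lagrangePoly F x}

end

/-! ### Regular subsets and the counting bound -/

/-- The weighted number of pairs of `A × B`, for a weight `f` on pairs. -/
def pairSum (f : ℕ → ℕ → ℝ) (A B : Finset ℕ) : ℝ := ∑ u ∈ A, ∑ v ∈ B, f u v

/-- `(A, B)` is regular for `f`: the density of `f` on any two subsets of relative size at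
least `θ` is within `ε` of `x`. Taking `x` as a parameter, instead of the density of `f` on
`(A, B)`, makes the notion inherited by large subsets with the same `x`. -/
def IsReg (f : ℕ → ℕ → ℝ) (A B : Finset ℕ) (x ε θ : ℝ) : Prop :=
  ∀ A' ⊆ A, ∀ B' ⊆ B, θ * #A ≤ #A' → θ * #B ≤ #B' →
    pairSum f A' B' ≤ (x + ε) * (#A' * #B') ∧ (x - ε) * (#A' * #B') ≤ pairSum f A' B'

lemma pairSum_nonneg {f : ℕ → ℕ → ℝ} (h0 : ∀ u v, 0 ≤ f u v) (A B : Finset ℕ) :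
    0 ≤ pairSum f A B :=
  sum_nonneg fun _ _ => sum_nonneg fun _ _ => h0 _ _

lemma pairSum_le {f : ℕ → ℕ → ℝ} (h1 : ∀ u v, f u v ≤ 1) (A B : Finset ℕ) :
    pairSum f A B ≤ #A * #B := by
  calc pairSum f A B ≤ ∑ u ∈ A, ∑ v ∈ B, (1 : ℝ) :=
        sum_le_sum fun _ _ => sum_le_sum fun _ _ => h1 _ _
    _ = #A * #B := by simp

/-- The block decomposition of `A × B` along `A' × B'`. -/
lemma pairSum_split (f : ℕ → ℕ → ℝ) {A B A' B' : Finset ℕ} (hA : A' ⊆ A) (hB : B' ⊆ B) :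
    pairSum f A B = pairSum f A' B' + pairSum f A' (B \ B') + pairSum f (A \ A') B := by
  unfold pairSum
  rw [← sum_sdiff hA, add_comm, ← sum_add_distrib]
  congr 1
  refine sum_congr rfl fun u _ => ?_
  rw [← sum_sdiff hB, add_comm]

lemma IsReg.mono {f : ℕ → ℕ → ℝ} {A B A' B' : Finset ℕ} {x ε θ δ : ℝ} (hθ : 0 ≤ θ)
    (h : IsReg f A B x ε (θ * δ)) (hA : A' ⊆ A) (hB : B' ⊆ B)
    (hA' : δ * #A ≤ #A') (hB' : δ * #B ≤ #B') : IsReg f A' B' x ε θ := by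
  intro A'' h1 B'' h2 h3 h4
  refine h A'' (h1.trans hA) B'' (h2.trans hB) ?_ ?_
  · have := mul_le_mul_of_nonneg_left hA' hθ
    linarith
  · have := mul_le_mul_of_nonneg_left hB' hθ
    linarith

/-- Density increment: as long as some large pair of subsets is denser by `ε`, pass to it. The
density cannot exceed `1`, so this stops after at most `r` steps. -/
lemma exists_upper_regular {ε θ : ℝ} (hε : 0 < ε) (hθ : 0 < θ) (hθ1 : θ ≤ 1) (r : ℕ) :
    ∃ δ : ℝ, 0 < δ ∧ δ ≤ 1 ∧ ∀ f : ℕ → ℕ → ℝ, (∀ u v, 0 ≤ f u v) → (∀ u v, f u v ≤ 1) →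
      ∀ A B : Finset ℕ, (1 - r * ε) * (#A * #B) ≤ pairSum f A B →
      ∃ A' ⊆ A, ∃ B' ⊆ B, δ * #A ≤ #A' ∧ δ * #B ≤ #B' ∧ ∃ x : ℝ, 1 - r * ε ≤ x ∧
        x * (#A' * #B') ≤ pairSum f A' B' ∧
        ∀ A'' ⊆ A', ∀ B'' ⊆ B', θ * #A' ≤ #A'' → θ * #B' ≤ #B'' →
          pairSum f A'' B'' ≤ (x + ε) * (#A'' * #B'') := by
  induction r with
  | zero =>
    refine ⟨1, one_pos, le_rfl, fun f _ h1 A B hAB =>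
      ⟨A, Subset.rfl, B, Subset.rfl, by simp, by simp, 1, by simp, by simpa using hAB, ?_⟩⟩
    intro A'' _ B'' _ _ _
    have := pairSum_le h1 A'' B''
    have h : (0 : ℝ) ≤ #A'' * #B'' := by positivity
    nlinarith
  | succ r ih =>
    obtain ⟨δ, hδ, hδ1, H⟩ := ih
    refine ⟨δ * θ, by positivity, by nlinarith, fun f h0 h1 A B hAB => ?_⟩
    by_cases hreg : ∀ A'' ⊆ A, ∀ B'' ⊆ B, θ * #A ≤ #A'' → θ * #B ≤ #B'' →
          pairSum f A'' B'' ≤ ((1 - (r + 1 : ℕ) * ε) + ε) * (#A'' * #B'')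
    · have hc : δ * θ ≤ 1 := by nlinarith
      exact ⟨A, Subset.rfl, B, Subset.rfl, by nlinarith [(#A).cast_nonneg (α := ℝ)],
        by nlinarith [(#B).cast_nonneg (α := ℝ)], _, le_rfl, hAB, hreg⟩
    · push Not at hreg
      obtain ⟨A₁, hA₁, B₁, hB₁, hA, hB, hlt⟩ := hreg
      obtain ⟨A', hA', B', hB', ha, hb, x, hx, h⟩ := H f h0 h1 A₁ B₁ (by
        refine le_trans (le_of_eq ?_) hlt.le
        push_cast; ring)
      refine ⟨A', hA'.trans hA₁, B', hB'.trans hB₁, ?_, ?_, x, ?_, h⟩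
      · nlinarith
      · nlinarith
      · push_cast; nlinarith

/-- Every pair of sets has a regular pair of subsets of bounded relative size. A pair on which
no large subpair is much denser than average has no much sparser large subpair either, as the
remaining blocks could not make up for it. -/
lemma exists_regular {ε θ : ℝ} (hε : 0 < ε) (hε1 : ε ≤ 1) (hθ : 0 < θ) (hθ1 : θ ≤ 1) :
    ∃ δ : ℝ, 0 < δ ∧ δ ≤ 1 ∧ ∀ f : ℕ → ℕ → ℝ, (∀ u v, 0 ≤ f u v) → (∀ u v, f u v ≤ 1) →
      ∀ A B : Finset ℕ, ∃ A' ⊆ A, ∃ B' ⊆ B, δ * #A ≤ #A' ∧ δ * #B ≤ #B' ∧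
        ∃ x : ℝ, IsReg f A' B' x ε θ := by
  set e := ε * θ ^ 2 / 3 with he
  have hθ2 : θ ^ 2 ≤ θ := by nlinarith
  have he0 : 0 < e := by positivity
  have heθ : e ≤ θ := by
    have : ε * θ ^ 2 ≤ 1 * θ ^ 2 := by gcongr
    rw [he]; linarith
  have heε : e ≤ ε := by
    have : ε * θ ^ 2 ≤ ε * 1 := by gcongr; linarith
    rw [he]; linarith
  set r := ⌈1 / e⌉₊
  have hr1 : 1 ≤ r * e := by
    have := Nat.le_ceil (1 / e)
    rwa [div_le_iff₀ he0] at this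
  have hr2 : r * e ≤ 1 + e := by
    have := (Nat.ceil_lt_add_one (one_div_pos.2 he0).le).le
    calc r * e ≤ (1 / e + 1) * e := by gcongr
      _ = 1 + e := by field_simp
  obtain ⟨δ, hδ, hδ1, H⟩ := exists_upper_regular he0 he0 (heθ.trans hθ1) r
  refine ⟨δ, hδ, hδ1, fun f h0 h1 A B => ?_⟩
  obtain ⟨A', hA', B', hB', ha, hb, x, hx, hlow, hup⟩ := H f h0 h1 A B (by
    have := pairSum_nonneg h0 A B
    have h : (0 : ℝ) ≤ #A * #B := by positivity
    nlinarith)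
  refine ⟨A', hA', B', hB', ha, hb, x, fun A₁ hA₁ B₁ hB₁ hA hB => ?_⟩
  have ha0 : (0 : ℝ) ≤ #A' := by positivity
  have hb0 : (0 : ℝ) ≤ #B' := by positivity
  have hup1 := hup A₁ hA₁ B₁ hB₁ (by nlinarith) (by nlinarith)
  have hm : (0 : ℝ) ≤ #A₁ * #B₁ := by positivity
  refine ⟨hup1.trans (by gcongr), ?_⟩
  have hx0 : 0 ≤ x + e := by linarith
  -- a block that is too small for `hup` is negligible
  have key : ∀ S ⊆ A', ∀ T ⊆ B',
      pairSum f S T ≤ (x + e) * (#S * #T) + e * (#A' * #B') := by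
    intro S hS T hT
    have hS' : (#S : ℝ) ≤ #A' := by exact_mod_cast card_le_card hS
    have hT' : (#T : ℝ) ≤ #B' := by exact_mod_cast card_le_card hT
    have hp : 0 ≤ (x + e) * (#S * #T : ℝ) := by positivity
    by_cases h : e * #A' ≤ #S ∧ e * #B' ≤ #T
    · have := hup S hS T hT h.1 h.2
      have : 0 ≤ e * (#A' * #B' : ℝ) := by positivity
      linarith
    · have h2 := pairSum_le h1 S T
      have : (#S * #T : ℝ) ≤ e * (#A' * #B') := by
        rw [not_and_or, not_le, not_le] at h
        rcases h with h | h
        · calc (#S * #T : ℝ) ≤ (e * #A') * #B' := by gcongr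
            _ = _ := by ring
        · calc (#S * #T : ℝ) ≤ #A' * (e * #B') := by gcongr
            _ = _ := by ring
      linarith
  have k1 := key A₁ hA₁ (B' \ B₁) sdiff_subset
  have k2 := key (A' \ A₁) sdiff_subset B' Subset.rfl
  have hsp := pairSum_split f hA₁ hB₁
  have c1 : (#(B' \ B₁) : ℝ) = #B' - #B₁ := by
    rw [card_sdiff_of_subset hB₁, Nat.cast_sub (card_le_card hB₁)]
  have c2 : (#(A' \ A₁) : ℝ) = #A' - #A₁ := by
    rw [card_sdiff_of_subset hA₁, Nat.cast_sub (card_le_card hA₁)]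
  rw [c1] at k1
  rw [c2] at k2
  have hbig : θ ^ 2 * (#A' * #B' : ℝ) ≤ #A₁ * #B₁ := by
    calc θ ^ 2 * (#A' * #B' : ℝ) = (θ * #A') * (θ * #B') := by ring
      _ ≤ _ := by gcongr
  have hbig2 : 3 * e * (#A' * #B' : ℝ) ≤ ε * (#A₁ * #B₁) := by
    calc 3 * e * (#A' * #B' : ℝ) = ε * (θ ^ 2 * (#A' * #B')) := by rw [he]; ring
      _ ≤ _ := by gcongr
  nlinarith [mul_nonneg he0.le hm]

/-- Finitely many regularity requirements can be met simultaneously, one after the other. -/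
lemma exists_all_regular {C : Type} [DecidableEq C] {ε : ℝ} (hε : 0 < ε) (hε1 : ε ≤ 1)
    (l : List (ℕ × ℕ × C)) : (∀ τ ∈ l, τ.1 ≠ τ.2.1) → ∀ θ : ℝ, 0 < θ → θ ≤ 1 →
    ∃ δ : ℝ, 0 < δ ∧ δ ≤ 1 ∧ ∀ f : C → ℕ → ℕ → ℝ, (∀ a u v, 0 ≤ f a u v) →
      (∀ a u v, f a u v ≤ 1) → ∀ A : ℕ → Finset ℕ, ∃ A' : ℕ → Finset ℕ,
        (∀ i, A' i ⊆ A i) ∧ (∀ i, δ * #(A i) ≤ #(A' i)) ∧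
        ∀ τ ∈ l, ∃ x : ℝ, IsReg (f τ.2.2) (A' τ.1) (A' τ.2.1) x ε θ := by
  induction l with
  | nil =>
    intro _ θ _ _
    exact ⟨1, one_pos, le_rfl, fun f _ _ A => ⟨A, fun _ => Subset.rfl, by simp, by simp⟩⟩
  | cons τ l ih =>
    intro hl θ hθ hθ1
    obtain ⟨δ₂, hδ₂, hδ₂1, H₂⟩ := ih (fun σ hσ => hl σ (List.mem_cons_of_mem _ hσ)) θ hθ hθ1
    obtain ⟨δ₁, hδ₁, hδ₁1, H₁⟩ := exists_regular hε hε1 (mul_pos hθ hδ₂)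
      (mul_le_one₀ hθ1 hδ₂.le hδ₂1)
    refine ⟨δ₂ * δ₁, by positivity, mul_le_one₀ hδ₂1 hδ₁.le hδ₁1, fun f h0 h1 A => ?_⟩
    obtain ⟨S, hS, T, hT, hSc, hTc, x, hx⟩ :=
      H₁ (f τ.2.2) (h0 _) (h1 _) (A τ.1) (A τ.2.1)
    have hne : τ.1 ≠ τ.2.1 := hl τ List.mem_cons_self
    set A₁ := Function.update (Function.update A τ.1 S) τ.2.1 T with hA₁
    have e1 : A₁ τ.1 = S := by simp [hA₁, Function.update_of_ne hne]
    have e2 : A₁ τ.2.1 = T := by simp [hA₁]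
    have hprop : ∀ i, A₁ i ⊆ A i ∧ δ₁ * #(A i) ≤ #(A₁ i) := by
      intro i
      by_cases h2 : i = τ.2.1
      · subst h2; rw [e2]; exact ⟨hT, hTc⟩
      by_cases h1 : i = τ.1
      · subst h1; rw [e1]; exact ⟨hS, hSc⟩
      · have : A₁ i = A i := by simp [hA₁, h1, h2]
        rw [this]
        exact ⟨Subset.rfl, mul_le_of_le_one_left (by positivity) hδ₁1⟩
    obtain ⟨A', hA', hc, hr⟩ := H₂ f h0 h1 A₁
    refine ⟨A', fun i => (hA' i).trans (hprop i).1, fun i => ?_, fun σ hσ => ?_⟩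
    · calc δ₂ * δ₁ * #(A i) = δ₂ * (δ₁ * #(A i)) := by ring
        _ ≤ δ₂ * #(A₁ i) := by gcongr; exact (hprop i).2
        _ ≤ _ := hc i
    · rcases List.mem_cons.1 hσ with rfl | hσ
      · refine ⟨x, IsReg.mono (A := S) (B := T) hθ.le hx ?_ ?_ ?_ ?_⟩
        · exact e1 ▸ hA' _
        · exact e2 ▸ hA' _
        · exact e1 ▸ hc _
        · exact e2 ▸ hc _
      · exact hr σ hσ

/-- Upper counting lemma for triangles: only upper bounds on the densities of large subpairs
are needed. The weights `g` and `h` are indicators. -/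
lemma triangle_count_le {f g h : ℕ → ℕ → ℝ} (f1 : ∀ u v, f u v ≤ 1)
    (hg : ∀ u v, g u v = 0 ∨ g u v = 1) (hh : ∀ u v, h u v = 0 ∨ h u v = 1)
    {A B D : Finset ℕ} {p q s θ : ℝ} (hp0 : 0 ≤ p) (hp : p ≤ 2)
    (hs0 : 0 ≤ s) (hθ : 0 ≤ θ)
    (hf : ∀ A' ⊆ A, ∀ B' ⊆ B, θ * #A ≤ #A' → θ * #B ≤ #B' →
      pairSum f A' B' ≤ p * (#A' * #B'))
    (hgq : pairSum g B D ≤ q * (#B * #D))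
    (hhs : ∀ D' ⊆ D, θ * #D ≤ #D' → pairSum h A D' ≤ s * (#A * #D')) :
    ∑ u ∈ A, ∑ v ∈ B, ∑ w ∈ D, f u v * g v w * h u w
      ≤ (p * q * s + 3 * θ) * (#A * #B * #D) := by
  set Aw : ℕ → Finset ℕ := fun w => A.filter fun u => h u w = 1 with hAw
  set Bw : ℕ → Finset ℕ := fun w => B.filter fun v => g v w = 1 with hBw
  have hAc : ∀ w, (#(Aw w) : ℝ) = ∑ u ∈ A, h u w := by
    intro w
    rw [hAw, card_filter]
    push_cast
    refine sum_congr rfl fun u _ => ?_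
    rcases hh u w with h | h <;> simp [h]
  have hBc : ∀ w, (#(Bw w) : ℝ) = ∑ v ∈ B, g v w := by
    intro w
    rw [hBw, card_filter]
    push_cast
    refine sum_congr rfl fun v _ => ?_
    rcases hg v w with h | h <;> simp [h]
  have hAle : ∀ w, (#(Aw w) : ℝ) ≤ #A := fun w => by
    exact_mod_cast card_le_card (filter_subset _ _)
  have hBle : ∀ w, (#(Bw w) : ℝ) ≤ #B := fun w => by
    exact_mod_cast card_le_card (filter_subset _ _)
  have hswap : ∑ u ∈ A, ∑ v ∈ B, ∑ w ∈ D, f u v * g v w * h u w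
      = ∑ w ∈ D, pairSum f (Aw w) (Bw w) := by
    calc _ = ∑ u ∈ A, ∑ w ∈ D, ∑ v ∈ B, f u v * g v w * h u w :=
          sum_congr rfl fun _ _ => sum_comm
      _ = ∑ w ∈ D, ∑ u ∈ A, ∑ v ∈ B, f u v * g v w * h u w := sum_comm
      _ = _ := by
          refine sum_congr rfl fun w _ => ?_
          unfold pairSum
          rw [hAw, sum_filter]
          refine sum_congr rfl fun u _ => ?_
          rw [hBw, sum_filter]
          rcases hh u w with h | h
          · simp [h]
          · simp only [h, if_true]
            refine sum_congr rfl fun v _ => ?_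
            rcases hg v w with h | h <;> simp [h]
  have hone : ∀ w, pairSum f (Aw w) (Bw w) ≤ p * (#(Aw w) * #(Bw w)) + θ * (#A * #B) := by
    intro w
    by_cases hbig : θ * #A ≤ #(Aw w) ∧ θ * #B ≤ #(Bw w)
    · have := hf (Aw w) (filter_subset _ _) (Bw w) (filter_subset _ _) hbig.1 hbig.2
      have : 0 ≤ θ * (#A * #B : ℝ) := by positivity
      linarith
    · have h2 := pairSum_le f1 (Aw w) (Bw w)
      have : (#(Aw w) * #(Bw w) : ℝ) ≤ θ * (#A * #B) := by
        rw [not_and_or, not_le, not_le] at hbig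
        rcases hbig with h | h
        · calc (#(Aw w) * #(Bw w) : ℝ) ≤ (θ * #A) * #B := by gcongr; exact filter_subset _ _
            _ = _ := by ring
        · calc (#(Aw w) * #(Bw w) : ℝ) ≤ #A * (θ * #B) := by gcongr; exact filter_subset _ _
            _ = _ := by ring
      have : 0 ≤ p * (#(Aw w) * #(Bw w) : ℝ) := by positivity
      linarith
  -- the vertices of `D` with exceptionally many `h`-neighbours in `A`
  set D' := D.filter fun w => s * #A < #(Aw w) with hD'
  have hD'c : (#D' : ℝ) ≤ θ * #D := by
    by_contra hcon
    push Not at hcon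
    have h1 := hhs D' (filter_subset _ _) hcon.le
    have hpos : (0 : ℝ) < #D' := lt_of_le_of_lt (by positivity) hcon
    have hne : D'.Nonempty := card_pos.1 (by exact_mod_cast hpos)
    have h2 : ∑ w ∈ D', s * (#A : ℝ) < ∑ w ∈ D', (#(Aw w) : ℝ) :=
      sum_lt_sum_of_nonempty hne fun w hw => (mem_filter.1 hw).2
    have h3 : ∑ w ∈ D', (#(Aw w) : ℝ) = pairSum h A D' := by
      unfold pairSum
      rw [sum_comm]
      exact sum_congr rfl fun w _ => hAc w
    rw [h3, sum_const, nsmul_eq_mul] at h2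
    linarith
  have hsum : ∑ w ∈ D, (#(Aw w) * #(Bw w) : ℝ) ≤ s * q * (#A * #B * #D)
      + θ * (#A * #B * #D) := by
    have hpt : ∀ w ∈ D, (#(Aw w) * #(Bw w) : ℝ) ≤ s * #A * #(Bw w)
        + if s * #A < #(Aw w) then (#A * #B : ℝ) else 0 := by
      intro w _
      have hnn : 0 ≤ s * #A * (#(Bw w) : ℝ) := by positivity
      split_ifs with hlt
      · have : (#(Aw w) * #(Bw w) : ℝ) ≤ #A * #B := by
          gcongr <;> exact filter_subset _ _
        linarith
      · rw [add_zero]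
        gcongr
        exact not_lt.1 hlt
    refine (sum_le_sum hpt).trans ?_
    rw [sum_add_distrib, ← mul_sum, ← sum_filter, sum_const, nsmul_eq_mul]
    have h3 : ∑ w ∈ D, (#(Bw w) : ℝ) = pairSum g B D := by
      unfold pairSum
      rw [sum_comm]
      exact sum_congr rfl fun w _ => hBc w
    rw [h3]
    have h4 : s * #A * pairSum g B D ≤ s * #A * (q * (#B * #D)) := by gcongr
    have h5 : #D' * (#A * #B : ℝ) ≤ θ * #D * (#A * #B) := by gcongr
    linarith
  rw [hswap]
  calc ∑ w ∈ D, pairSum f (Aw w) (Bw w)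
      ≤ ∑ w ∈ D, (p * (#(Aw w) * #(Bw w)) + θ * (#A * #B)) := sum_le_sum fun w _ => hone w
    _ = p * ∑ w ∈ D, (#(Aw w) * #(Bw w) : ℝ) + θ * (#A * #B * #D) := by
        rw [sum_add_distrib, ← mul_sum, sum_const, nsmul_eq_mul]; ring
    _ ≤ p * (s * q * (#A * #B * #D) + θ * (#A * #B * #D)) + θ * (#A * #B * #D) := by gcongr
    _ = (p * q * s) * (#A * #B * #D) + (p + 1) * (θ * (#A * #B * #D)) := by ring
    _ ≤ (p * q * s) * (#A * #B * #D) + 3 * (θ * (#A * #B * #D)) := by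
        gcongr; linarith
    _ = _ := by ring

/-! ### A monochromatic triangle -/

/-- Ramsey's theorem for triangles and several colours. -/
lemma exists_mono_triangle {κ : Type} [DecidableEq κ] (r : ℕ) :
    ∃ K : ℕ, ∀ (S : Finset κ), #S = r → ∀ (T : Finset ℕ), K ≤ #T → ∀ c : ℕ → ℕ → κ,
      (∀ i ∈ T, ∀ j ∈ T, i < j → c i j ∈ S) →
      ∃ i ∈ T, ∃ j ∈ T, ∃ k ∈ T, i < j ∧ j < k ∧ c i j = c j k ∧ c i k = c j k := by
  induction r with
  | zero =>
    refine ⟨2, fun S hS T hT c hc => ?_⟩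
    obtain ⟨a, ha, b, hb, hab⟩ := one_lt_card.1 (show 1 < #T by omega)
    rw [card_eq_zero.1 hS] at hc
    rcases lt_or_gt_of_ne hab with h | h
    · simpa using hc a ha b hb h
    · simpa using hc b hb a ha h
  | succ r ih =>
    obtain ⟨K, hK⟩ := ih
    refine ⟨(r + 1) * K + 1, fun S hS T hT c hc => ?_⟩
    have hTne : T.Nonempty := card_pos.1 (by omega)
    set m := T.min' hTne with hm
    have hmT : m ∈ T := min'_mem _ _
    have hlt : ∀ j ∈ T.erase m, m < j := fun j hj =>
      lt_of_le_of_ne (min'_le _ _ (mem_of_mem_erase hj)) (ne_of_mem_erase hj).symm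
    -- a colour that is popular among the pairs at the least point `m`
    obtain ⟨s, hs, hcard⟩ := exists_le_card_fiber_of_mul_le_card_of_maps_to
      (s := T.erase m) (t := S) (f := fun j => c m j) (n := K)
      (fun j hj => hc m hmT j (mem_of_mem_erase hj) (hlt j hj))
      (card_pos.1 (by omega)) (by rw [hS, card_erase_of_mem hmT]; omega)
    set T' := (T.erase m).filter fun j => c m j = s with hT'
    have hT'T : ∀ j ∈ T', j ∈ T ∧ m < j ∧ c m j = s := fun j hj => by
      rw [hT', mem_filter] at hj
      exact ⟨mem_of_mem_erase hj.1, hlt j hj.1, hj.2⟩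
    by_cases hex : ∃ i ∈ T', ∃ j ∈ T', i < j ∧ c i j = s
    · obtain ⟨i, hi, j, hj, hij, hcs⟩ := hex
      exact ⟨m, hmT, i, (hT'T i hi).1, j, (hT'T j hj).1, (hT'T i hi).2.1, hij,
        by rw [(hT'T i hi).2.2, hcs], by rw [(hT'T j hj).2.2, hcs]⟩
    · push Not at hex
      obtain ⟨i, hi, j, hj, k, hk, h⟩ := hK (S.erase s) (by rw [card_erase_of_mem hs]; omega)
        T' hcard c fun i hi j hj hij => mem_erase.2 ⟨hex i hi j hj hij,
          hc i (hT'T i hi).1 j (hT'T j hj).1 hij⟩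
      exact ⟨i, (hT'T i hi).1, j, (hT'T j hj).1, k, (hT'T k hk).1, h⟩

/-- Among sufficiently many indices, there are `i < j < k` such that, of the vectors in the
unit cube attached to pairs, those at `ij` and `ik` exceed the one at `jk` by at most `ε`. -/
lemma exists_close_triangle (C : Type) [Fintype C] [DecidableEq C] {ε : ℝ} (hε : 0 < ε) :
    ∃ K : ℕ, ∀ y : ℕ → ℕ → C → ℝ, (∀ i < K, ∀ j < K, i < j → ∀ a, 0 ≤ y i j a ∧ y i j a ≤ 1) →
      ∃ i < K, ∃ j < K, ∃ k < K, i < j ∧ j < k ∧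
        ∀ a, y i j a ≤ y j k a + ε ∧ y i k a ≤ y j k a + ε := by
  set S : Finset (C → ℕ) := Fintype.piFinset fun _ => range (⌊1 / ε⌋₊ + 1) with hS
  obtain ⟨K, hK⟩ := exists_mono_triangle (κ := C → ℕ) #S
  refine ⟨K, fun y hy => ?_⟩
  obtain ⟨i, hi, j, hj, k, hk, hij, hjk, h1, h2⟩ := hK S rfl (range K) (by simp)
    (fun i j a => ⌊y i j a / ε⌋₊) (by
      intro i hi j hj hij
      rw [hS, Fintype.mem_piFinset]
      intro a
      rw [mem_range, Nat.lt_succ_iff]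
      have := (hy i (mem_range.1 hi) j (mem_range.1 hj) hij a).2
      gcongr)
  rw [mem_range] at hi hj hk
  refine ⟨i, hi, j, hj, k, hk, hij, hjk, fun a => ?_⟩
  have key : ∀ p q : ℝ, 0 ≤ q → ⌊p / ε⌋₊ = ⌊q / ε⌋₊ → p ≤ q + ε := by
    intro p q hq h
    have h3 := (Nat.lt_floor_add_one (p / ε)).le
    have h4 := Nat.floor_le (div_nonneg hq hε.le)
    rw [h] at h3
    have h5 : p / ε ≤ q / ε + 1 := by linarith
    calc p = p / ε * ε := by field_simp
      _ ≤ (q / ε + 1) * ε := by gcongr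
      _ = q + ε := by field_simp
  have hq := (hy j hj k hk hjk a).1
  exact ⟨key _ _ hq (congrFun h1 a), key _ _ hq (congrFun h2 a)⟩

/-! ### Palettes and the upper bound -/

/-- The Lagrange polynomial of a palette `P`, a set of ordered triples of colours. -/
def lamPal {C : Type} (P : Finset (C × C × C)) (x : C → ℝ) : ℝ :=
  ∑ p ∈ P, x p.1 * x p.2.1 * x p.2.2

/-- `H` satisfies the palette `P`: for some vertex ordering `ord` and some colouring `φ` of
pairs, every edge `u < v < w` has colour pattern `(φ uv, φ vw, φ uw)` in `P`. Only the values
of `φ` on increasing pairs matter. -/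
def Sat {C : Type} (P : Finset (C × C × C)) (H : ThreeGraph) : Prop :=
  ∃ (ord : ℕ → ℕ) (φ : ℕ → ℕ → C), Set.InjOn ord ↑H.verts ∧
    ∀ u v w : ℕ, ({u, v, w} : Finset ℕ) ∈ H.edges → ord u < ord v → ord v < ord w →
      (φ u v, φ v w, φ u w) ∈ P

lemma Sat.of_sub {C : Type} {P : Finset (C × C × C)} {F H : ThreeGraph} (h : Sat P H)
    (hFH : IsSubhypergraph F H) : Sat P F := by
  obtain ⟨ord, φ, hinj, hP⟩ := h
  obtain ⟨f, hf, hv, he⟩ := hFH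
  refine ⟨fun u => ord (f u), fun u v => φ (f u) (f v), ?_, ?_⟩
  · intro u hu v hv' huv
    exact hf hu hv' (hinj (hv u hu) (hv v hv') huv)
  · intro u v w huvw h1 h2
    refine hP _ _ _ ?_ h1 h2
    have := he _ huvw
    simpa [image_insert, image_singleton] using this

/-- The graphs avoiding all graphs that do not satisfy `P` are those satisfying `P`. -/
lemma free_iff_sat {C : Type} (P : Finset (C × C × C)) (H : ThreeGraph) :
    (∀ F ∈ {F : ThreeGraph | ¬ Sat P F}, ¬ IsSubhypergraph F H) ↔ Sat P H := by
  constructor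
  · intro h
    by_contra hn
    exact h H hn ⟨id, Set.injOn_id _, fun _ hv => hv, fun e he => by simpa using he⟩
  · exact fun h F hF hsub => hF (h.of_sub hsub)

/-- Consecutive blocks of `q` vertices in an ordered vertex set. -/
lemma exists_blocks (V : Finset ℕ) (ord : ℕ → ℕ) (hinj : Set.InjOn ord ↑V) (K q : ℕ)
    (hq : K * q ≤ #V) : ∃ A : ℕ → Finset ℕ, (∀ i, A i ⊆ V) ∧ (∀ i < K, q ≤ #(A i)) ∧
      ∀ i j, i < j → ∀ u ∈ A i, ∀ v ∈ A j, ord u < ord v := by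
  -- the rank of a vertex in the ordering
  set r : ℕ → ℕ := fun u => #(V.filter fun v => ord v < ord u) with hr
  have hmono : ∀ u v, ord u ≤ ord v → r u ≤ r v := fun u v h =>
    card_le_card fun x hx => by
      rw [mem_filter] at hx ⊢
      exact ⟨hx.1, hx.2.trans_le h⟩
  have hstrict : ∀ u ∈ V, ∀ v, ord u < ord v → r u < r v := fun u hu v h =>
    card_lt_card ⟨fun x hx => by
      rw [mem_filter] at hx ⊢
      exact ⟨hx.1, hx.2.trans h⟩, fun hsub => by
        have := hsub (mem_filter.2 ⟨hu, h⟩)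
        simp at this⟩
  have himg : V.image r = range #V := by
    refine eq_of_subset_of_card_le ?_ ?_
    · intro x hx
      obtain ⟨u, hu, rfl⟩ := mem_image.1 hx
      rw [mem_range]
      refine card_lt_card ⟨filter_subset _ _, fun hsub => ?_⟩
      have := hsub hu
      simp at this
    · rw [card_range, card_image_of_injOn]
      intro u hu v hv huv
      by_contra hne
      rcases lt_or_gt_of_ne (fun h => hne (hinj hu hv h)) with h | h
      · exact (hstrict u hu v h).ne huv
      · exact (hstrict v hv u h).ne huv.symm
  refine ⟨fun i => V.filter fun u => i * q ≤ r u ∧ r u < (i + 1) * q,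
    fun i => filter_subset _ _, fun i hi => ?_, fun i j hij u hu v hv => ?_⟩
  · have hsub : Finset.Ico (i * q) ((i + 1) * q) ⊆
        (V.filter fun u => i * q ≤ r u ∧ r u < (i + 1) * q).image r := by
      intro x hx
      rw [Finset.mem_Ico] at hx
      have hxV : x ∈ V.image r := by
        rw [himg, mem_range]
        have : (i + 1) * q ≤ K * q := Nat.mul_le_mul_right _ hi
        omega
      obtain ⟨u, hu, rfl⟩ := mem_image.1 hxV
      exact mem_image.2 ⟨u, mem_filter.2 ⟨hu, hx⟩, rfl⟩
    have := (card_le_card hsub).trans card_image_le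
    rw [Nat.card_Ico] at this
    have h2 : (i + 1) * q = i * q + q := by ring
    change q ≤ #(V.filter fun u => i * q ≤ r u ∧ r u < (i + 1) * q)
    omega
  · rw [mem_filter] at hu hv
    by_contra hcon
    have h1 := hmono v u (not_lt.1 hcon)
    have : (i + 1) * q ≤ j * q := Nat.mul_le_mul_right _ hij
    omega

/-- In a graph satisfying `P`, the edges across three consecutive sets of vertices are among
the triples whose colour pattern lies in `P`. -/
lemma eVVV_le_pattern {C : Type} [DecidableEq C] {P : Finset (C × C × C)} {H : ThreeGraph}
    {ord : ℕ → ℕ} {φ : ℕ → ℕ → C}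
    (hP : ∀ u v w : ℕ, ({u, v, w} : Finset ℕ) ∈ H.edges → ord u < ord v → ord v < ord w →
      (φ u v, φ v w, φ u w) ∈ P) {A B D : Finset ℕ}
    (hAB : ∀ u ∈ A, ∀ v ∈ B, ord u < ord v) (hBD : ∀ u ∈ B, ∀ v ∈ D, ord u < ord v) :
    (eVVV H A B D : ℝ) ≤ ∑ p ∈ P, ∑ u ∈ A, ∑ v ∈ B, ∑ w ∈ D,
      (if φ u v = p.1 then (1 : ℝ) else 0) * (if φ v w = p.2.1 then 1 else 0) *
        (if φ u w = p.2.2 then 1 else 0) := by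
  have hR : ∑ p ∈ P, ∑ u ∈ A, ∑ v ∈ B, ∑ w ∈ D,
      (if φ u v = p.1 then (1 : ℝ) else 0) * (if φ v w = p.2.1 then 1 else 0) *
        (if φ u w = p.2.2 then 1 else 0) =
      ∑ q ∈ A ×ˢ B ×ˢ D, ∑ p ∈ P, (if φ q.1 q.2.1 = p.1 then (1 : ℝ) else 0) *
        (if φ q.2.1 q.2.2 = p.2.1 then 1 else 0) * (if φ q.1 q.2.2 = p.2.2 then 1 else 0) := by
    rw [sum_comm (s := A ×ˢ B ×ˢ D)]
    refine sum_congr rfl fun p _ => ?_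
    rw [sum_product]
    exact sum_congr rfl fun u _ => by rw [sum_product]
  rw [hR, eVVV, card_filter]
  push_cast
  refine sum_le_sum fun q hq => ?_
  obtain ⟨hu, hq⟩ := mem_product.1 hq
  obtain ⟨hv, hw⟩ := mem_product.1 hq
  have hnn : ∀ p ∈ P, 0 ≤ (if φ q.1 q.2.1 = p.1 then (1 : ℝ) else 0) *
      (if φ q.2.1 q.2.2 = p.2.1 then 1 else 0) * (if φ q.1 q.2.2 = p.2.2 then 1 else 0) :=
    fun p _ => by positivity
  split_ifs with hedge
  · have hmem := hP _ _ _ hedge (hAB _ hu _ hv) (hBD _ hv _ hw)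
    refine le_trans ?_ (single_le_sum hnn hmem)
    simp
  · exact sum_nonneg hnn

lemma perturbed_mul_le {a b c ε : ℝ} (hε : 0 ≤ ε) (hε4 : ε ≤ 1 / 4) (a1 : a ≤ 1)
    (b0 : 0 ≤ b) (b1 : b ≤ 1) (c0 : 0 ≤ c) (c1 : c ≤ 1) :
    (a + 3 * ε) * (b + 3 * ε) * (c + 3 * ε) + 3 * ε ≤ a * b * c + 31 * ε := by
  have e1 : a * b ≤ 1 := mul_le_one₀ a1 b0 b1
  have e2 : a * c ≤ 1 := mul_le_one₀ a1 c0 c1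
  have e3 : b * c ≤ 1 := mul_le_one₀ b1 c0 c1
  have hε2 : ε ^ 2 ≤ ε / 4 := by nlinarith
  have hε3 : ε ^ 3 ≤ ε / 16 := by nlinarith [mul_le_mul_of_nonneg_left hε2 hε]
  have t1 : 3 * ε * (a * b + a * c + b * c) ≤ 3 * ε * 3 := by gcongr; linarith
  have t2 : 9 * ε ^ 2 * (a + b + c) ≤ 9 * ε ^ 2 * 3 := by gcongr; linarith
  have exp : (a + 3 * ε) * (b + 3 * ε) * (c + 3 * ε) = a * b * c
      + 3 * ε * (a * b + a * c + b * c) + 9 * ε ^ 2 * (a + b + c) + 27 * ε ^ 3 := by ring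
  rw [exp]
  linarith

set_option maxHeartbeats 800000 in
/-- Arbitrarily large graphs satisfying `P` whose `▽`-density is `d` up to arbitrarily small
errors force `d` to be at most any bound for the polynomial of `P` on the simplex. -/
lemma density_le {C : Type} [Fintype C] [DecidableEq C] (P : Finset (C × C × C)) {L d : ℝ}
    (hL : ∀ y : C → ℝ, (∀ a, 0 ≤ y a) → ∑ a, y a = 1 → lamPal P y ≤ L)
    (h : ∀ η : ℝ, 0 < η → ∀ n : ℕ, ∃ H : ThreeGraph, n ≤ #H.verts ∧ Sat P H ∧
      IsDenseVVV H d η) : d ≤ L := by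
  by_contra hcon
  push Not at hcon
  set γ := d - L with hγ
  have hγ0 : 0 < γ := by linarith
  set M : ℝ := (#P : ℝ) with hM
  have hM0 : 0 ≤ M := by positivity
  -- the total error made in counting below is at most `M * 31 * ε`
  set ε := min (1 / 4) (γ / (62 * (M + 1))) with hεdef
  have hε : 0 < ε := lt_min (by norm_num) (by positivity)
  have hε4 : ε ≤ 1 / 4 := min_le_left _ _
  have hε1 : ε ≤ 1 := by linarith
  have hεM : M * (31 * ε) ≤ γ / 2 := by
    have h1 : ε ≤ γ / (62 * (M + 1)) := min_le_right _ _
    rw [le_div_iff₀ (by positivity)] at h1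
    nlinarith
  obtain ⟨K, hK⟩ := exists_close_triangle C hε
  set l : List (ℕ × ℕ × C) :=
    ((range K ×ˢ range K ×ˢ univ).filter fun τ => τ.1 < τ.2.1).toList with hl
  obtain ⟨δ, hδ, hδ1, hreg⟩ := exists_all_regular hε hε1 l (by
    intro τ hτ
    rw [hl, mem_toList, mem_filter] at hτ
    exact hτ.2.ne) ε hε hε1
  set κ := δ / (2 * (K + 1)) with hκ
  have hκ0 : 0 < κ := by positivity
  obtain ⟨H, hn, ⟨ord, φ, hinj, hP⟩, hdense⟩ := h (γ * κ ^ 3 / 4) (by positivity) (K + 1)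
  set N := #H.verts with hN
  have hq : K * (N / (K + 1)) ≤ N :=
    (Nat.mul_le_mul_right _ (Nat.le_succ K)).trans (Nat.mul_div_le _ _)
  obtain ⟨A, hAV, hAq, hAord⟩ := exists_blocks H.verts ord hinj K _ hq
  set f : C → ℕ → ℕ → ℝ := fun a u v => if φ u v = a then 1 else 0 with hf
  have f01 : ∀ a u v, f a u v = 0 ∨ f a u v = 1 := fun a u v => by
    by_cases h : φ u v = a <;> simp [hf, h]
  have f0 : ∀ a u v, 0 ≤ f a u v := fun a u v => by
    rcases f01 a u v with h | h <;> rw [h]; norm_num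
  have f1 : ∀ a u v, f a u v ≤ 1 := fun a u v => by
    rcases f01 a u v with h | h <;> rw [h]; norm_num
  obtain ⟨A', hA', hA'c, hA'r⟩ := hreg f f0 f1 A
  have hNpos : (0 : ℝ) < N := by exact_mod_cast (show 0 < N by omega)
  have hsize : ∀ i < K, κ * N ≤ #(A' i) := by
    intro i hi
    have h1 : (N : ℝ) ≤ 2 * (K + 1) * (N / (K + 1) : ℕ) := by
      have h2 := Nat.div_add_mod N (K + 1)
      have h3 := Nat.mod_lt N (Nat.succ_pos K)
      have h4 : 1 ≤ N / (K + 1) := (Nat.one_le_div_iff (by omega)).2 hn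
      have h5 : N ≤ 2 * (K + 1) * (N / (K + 1)) := by nlinarith
      exact_mod_cast h5
    have h2 : ((N / (K + 1) : ℕ) : ℝ) ≤ #(A i) := by exact_mod_cast hAq i hi
    calc κ * N ≤ κ * (2 * (K + 1) * (N / (K + 1) : ℕ)) := by gcongr
      _ = δ * (N / (K + 1) : ℕ) := by rw [hκ]; field_simp
      _ ≤ δ * #(A i) := by gcongr
      _ ≤ _ := hA'c i
  have hpos : ∀ i < K, (0 : ℝ) < #(A' i) := fun i hi =>
    lt_of_lt_of_le (by positivity) (hsize i hi)
  -- the density of colour `a` between two of the regularised blocks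
  set y : ℕ → ℕ → C → ℝ :=
    fun i j a => pairSum (f a) (A' i) (A' j) / (#(A' i) * #(A' j)) with hy
  have hy0 : ∀ i j a, 0 ≤ y i j a := fun i j a =>
    div_nonneg (pairSum_nonneg (f0 a) _ _) (by positivity)
  have hy1 : ∀ i j a, y i j a ≤ 1 := fun i j a =>
    div_le_one_of_le₀ (pairSum_le (f1 a) _ _) (by positivity)
  have hysum : ∀ i < K, ∀ j < K, ∑ a, y i j a = 1 := by
    intro i hi j hj
    have h1 := hpos i hi
    have h2 := hpos j hj
    rw [hy, ← sum_div, div_eq_one_iff_eq (by positivity)]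
    unfold pairSum
    rw [sum_comm]
    simp_rw [sum_comm (s := univ)]
    simp [hf]
  have hyreg : ∀ i < K, ∀ j < K, i < j → ∀ a, ∀ S ⊆ A' i, ∀ T ⊆ A' j,
      ε * #(A' i) ≤ #S → ε * #(A' j) ≤ #T →
      pairSum (f a) S T ≤ (y i j a + 2 * ε) * (#S * #T) := by
    intro i hi j hj hij a S hS T hT hSc hTc
    obtain ⟨x, hx⟩ := hA'r (i, j, a) (by
      rw [hl, mem_toList, mem_filter]
      simp [hi, hj, hij])
    have h1 := hpos i hi
    have h2 := hpos j hj
    have h3 := (hx _ Subset.rfl _ Subset.rfl (by nlinarith) (by nlinarith)).2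
    have h4 : x - ε ≤ y i j a := (le_div_iff₀ (by positivity)).2 h3
    refine (hx S hS T hT hSc hTc).1.trans ?_
    have : x + ε ≤ y i j a + 2 * ε := by linarith
    gcongr
  obtain ⟨i, hi, j, hj, k, hk, hij, hjk, hclose⟩ :=
    hK y fun i _ j _ _ a => ⟨hy0 i j a, hy1 i j a⟩
  set z := y j k with hz
  have hlam : lamPal P z ≤ L := hL z (hy0 j k) (hysum j hj k hk)
  set m : ℝ := #(A' i) * #(A' j) * #(A' k) with hm
  have hm0 : 0 ≤ m := by positivity
  have hcount : ∀ p ∈ P, ∑ u ∈ A' i, ∑ v ∈ A' j, ∑ w ∈ A' k,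
      f p.1 u v * f p.2.1 v w * f p.2.2 u w ≤ (z p.1 * z p.2.1 * z p.2.2 + 31 * ε) * m := by
    intro p _
    have zb : ∀ a, 0 ≤ z a ∧ z a ≤ 1 := fun a => ⟨hy0 j k a, hy1 j k a⟩
    have hup : ∀ i' < K, ∀ j' < K, i' < j' → ∀ a, y i' j' a ≤ z a + ε →
        ∀ S ⊆ A' i', ∀ T ⊆ A' j', ε * #(A' i') ≤ #S → ε * #(A' j') ≤ #T →
        pairSum (f a) S T ≤ (z a + 3 * ε) * (#S * #T) := by
      intro i' hi' j' hj' hij' a ha S hS T hT h1 h2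
      refine (hyreg i' hi' j' hj' hij' a S hS T hT h1 h2).trans ?_
      have : y i' j' a + 2 * ε ≤ z a + 3 * ε := by linarith
      gcongr
    have hb : ∀ X : Finset ℕ, ε * (#X : ℝ) ≤ #X := fun X =>
      mul_le_of_le_one_left (by positivity) hε1
    have := triangle_count_le (f := f p.1) (g := f p.2.1) (h := f p.2.2) (f1 _)
      (f01 _) (f01 _) (A := A' i) (B := A' j) (D := A' k) (p := z p.1 + 3 * ε)
      (q := z p.2.1 + 3 * ε) (s := z p.2.2 + 3 * ε) (by linarith [(zb p.1).1])
      (by linarith [(zb p.1).2]) (by linarith [(zb p.2.2).1]) hε.le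
      (hup i hi j hj hij _ (hclose _).1)
      (hup j hj k hk hjk _ (by linarith) _ Subset.rfl _ Subset.rfl (hb _) (hb _))
      (fun D' hD' hc => hup i hi k hk (hij.trans hjk) _ (hclose _).2 _ Subset.rfl D' hD'
        (hb _) hc)
    refine this.trans ?_
    refine mul_le_mul_of_nonneg_right ?_ hm0
    exact perturbed_mul_le hε.le hε4 (zb _).2 (zb _).1 (zb _).2 (zb _).1 (zb _).2
  have hub : (eVVV H (A' i) (A' j) (A' k) : ℝ) ≤ (L + γ / 2) * m := by
    refine (eVVV_le_pattern hP ?_ ?_).trans ?_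
    · exact fun u hu v hv => hAord i j hij u (hA' i hu) v (hA' j hv)
    · exact fun u hu v hv => hAord j k hjk u (hA' j hu) v (hA' k hv)
    · refine (sum_le_sum hcount).trans ?_
      rw [← sum_mul, sum_add_distrib, sum_const, nsmul_eq_mul]
      refine mul_le_mul_of_nonneg_right ?_ hm0
      unfold lamPal at hlam
      linarith
  have hlb := hdense (A' i) (A' j) (A' k) ((hA' i).trans (hAV i)) ((hA' j).trans (hAV j))
    ((hA' k).trans (hAV k))
  have hmN : κ ^ 3 * (N : ℝ) ^ 3 ≤ m := by
    calc κ ^ 3 * (N : ℝ) ^ 3 = (κ * N) * (κ * N) * (κ * N) := by ring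
      _ ≤ m := by
        rw [hm]
        have := hsize i hi
        have := hsize j hj
        have := hsize k hk
        gcongr
  have hfin : γ / 2 * (κ ^ 3 * (N : ℝ) ^ 3) ≤ γ / 2 * m := by gcongr
  have hprod : d * #(A' i) * #(A' j) * #(A' k) = (L + γ) * m := by rw [hm, hγ]; ring
  rw [hprod] at hlb
  have : 0 < γ * (κ ^ 3 * (N : ℝ) ^ 3) := by positivity
  nlinarith

/-! ### Random colourings and the lower bound -/

lemma sum_weight {ι C : Type} [Fintype ι] [DecidableEq ι] [Fintype C] {x : C → ℝ}
    (hx : ∑ c, x c = 1) : ∑ φ : ι → C, ∏ e, x (φ e) = 1 := by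
  have := Finset.prod_univ_sum (fun _ : ι => (univ : Finset C)) fun _ c => x c
  rw [Fintype.piFinset_univ] at this
  rw [← this]
  simp [hx]

/-- If the coordinates of `φ` are independent with distribution `x`, a mean zero function of one
coordinate times a function of the others has expectation zero. -/
lemma sum_weight_mul_eq_zero {ι C : Type} [Fintype ι] [DecidableEq ι] [Fintype C] {x : C → ℝ}
    (e₀ : ι) (g : C → ℝ) (hg : ∑ c, x c * g c = 0) (R : (ι → C) → ℝ)
    (hR : ∀ φ c, R (Function.update φ e₀ c) = R φ) :
    ∑ φ : ι → C, (∏ e, x (φ e)) * (g (φ e₀) * R φ) = 0 := by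
  rw [← (Equiv.funSplitAt e₀ C).symm.sum_comp, Fintype.sum_prod_type_right]
  refine sum_eq_zero fun ψ _ => ?_
  rcases isEmpty_or_nonempty C with hC | ⟨⟨c₀⟩⟩
  · simp
  set Φ : C → ι → C := fun c => (Equiv.funSplitAt e₀ C).symm (c, ψ) with hΦ
  have h1 : ∀ c, Φ c e₀ = c := fun c => by simp [hΦ, Equiv.funSplitAt]
  have h2 : ∀ c (j : {j // j ≠ e₀}), Φ c j = ψ j := fun c j => by
    simp [hΦ, Equiv.funSplitAt, j.2]
  have h3 : ∀ c, R (Φ c) = R (Φ c₀) := fun c => by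
    rw [← hR (Φ c₀) c]
    congr 1
    funext j
    by_cases hj : j = e₀
    · subst hj; simp [h1]
    · rw [Function.update_of_ne hj, h2 c ⟨j, hj⟩, h2 c₀ ⟨j, hj⟩]
  calc ∑ c, (∏ e, x (Φ c e)) * (g (Φ c e₀) * R (Φ c))
      = ∑ c, (x c * g c) * ((∏ j : {j // j ≠ e₀}, x (ψ j)) * R (Φ c₀)) := by
        refine sum_congr rfl fun c _ => ?_
        rw [Fintype.prod_eq_mul_prod_subtype_ne _ e₀, h1, h3]
        simp_rw [h2]
        ring
    _ = 0 := by rw [← sum_mul, hg, zero_mul]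

/-- The weighted number of closed walks of length four in the bipartite weighted graph `g` between
two copies of `S`, degenerate ones included. -/
def fourCycles {V : Type*} (S : Finset V) (g : V → V → ℝ) : ℝ :=
  ∑ u ∈ S, ∑ u' ∈ S, ∑ v ∈ S, ∑ v' ∈ S, g u v * g u v' * (g u' v * g u' v')

lemma fourCycles_eq {V : Type*} (S : Finset V) (g : V → V → ℝ) :
    fourCycles S g = ∑ v ∈ S, ∑ v' ∈ S, (∑ u ∈ S, g u v * g u v') ^ 2 := by
  unfold fourCycles
  simp_rw [sq, sum_mul_sum]
  calc _ = ∑ u ∈ S, ∑ v ∈ S, ∑ u' ∈ S, ∑ v' ∈ S, g u v * g u v' * (g u' v * g u' v') :=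
        sum_congr rfl fun _ _ => sum_comm
    _ = ∑ v ∈ S, ∑ u ∈ S, ∑ u' ∈ S, ∑ v' ∈ S, g u v * g u v' * (g u' v * g u' v') := sum_comm
    _ = _ := by
      refine sum_congr rfl fun v _ => ?_
      calc _ = ∑ u ∈ S, ∑ v' ∈ S, ∑ u' ∈ S, g u v * g u v' * (g u' v * g u' v') :=
            sum_congr rfl fun _ _ => sum_comm
        _ = _ := sum_comm

lemma fourCycles_nonneg {V : Type*} (S : Finset V) (g : V → V → ℝ) : 0 ≤ fourCycles S g := by
  rw [fourCycles_eq]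
  positivity

/-- Few four-cycles imply small cut norm, by Cauchy–Schwarz applied twice. -/
lemma cut_pow_four_le {V : Type*} (S : Finset V) (g : V → V → ℝ) {p q : V → ℝ}
    (hp : ∀ u, 0 ≤ p u ∧ p u ≤ 1) (hq : ∀ u, 0 ≤ q u ∧ q u ≤ 1) :
    (∑ u ∈ S, ∑ v ∈ S, g u v * p u * q v) ^ 4 ≤ (#S : ℝ) ^ 4 * fourCycles S g := by
  set G : V → ℝ := fun u => ∑ v ∈ S, g u v * q v with hG
  set k : V → V → ℝ := fun v v' => ∑ u ∈ S, g u v * g u v' with hk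
  have hT : ∑ u ∈ S, ∑ v ∈ S, g u v * p u * q v = ∑ u ∈ S, p u * G u := by
    refine sum_congr rfl fun u _ => ?_
    rw [hG, mul_sum]
    exact sum_congr rfl fun v _ => by ring
  have h1 : (∑ u ∈ S, p u * G u) ^ 2 ≤ #S * ∑ u ∈ S, G u ^ 2 := by
    refine sq_sum_le_card_mul_sum_sq.trans ?_
    refine mul_le_mul_of_nonneg_left (sum_le_sum fun u _ => ?_) (by positivity)
    rw [mul_pow]
    exact mul_le_of_le_one_left (sq_nonneg _) (pow_le_one₀ (hp u).1 (hp u).2)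
  have h2 : ∑ u ∈ S, G u ^ 2 = ∑ z ∈ S ×ˢ S, q z.1 * q z.2 * k z.1 z.2 := by
    rw [sum_product]
    simp_rw [hG, hk, sq, sum_mul_sum, mul_sum]
    rw [sum_comm]
    refine sum_congr rfl fun v _ => ?_
    rw [sum_comm]
    exact sum_congr rfl fun v' _ => sum_congr rfl fun u _ => by ring
  have h3 : (∑ z ∈ S ×ˢ S, q z.1 * q z.2 * k z.1 z.2) ^ 2 ≤ (#S : ℝ) ^ 2 * fourCycles S g := by
    refine sq_sum_le_card_mul_sum_sq.trans ?_
    rw [card_product, fourCycles_eq, ← sum_product']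
    push_cast
    rw [← sq]
    refine mul_le_mul_of_nonneg_left (sum_le_sum fun z _ => ?_) (by positivity)
    rw [mul_pow]
    refine mul_le_of_le_one_left (sq_nonneg _) (pow_le_one₀ ?_ ?_)
    · exact mul_nonneg (hq _).1 (hq _).1
    · exact mul_le_one₀ (hq _).2 (hq _).1 (hq _).2
  rw [hT]
  calc (∑ u ∈ S, p u * G u) ^ 4 = ((∑ u ∈ S, p u * G u) ^ 2) ^ 2 := by ring
    _ ≤ (#S * ∑ u ∈ S, G u ^ 2) ^ 2 := by gcongr
    _ = (#S : ℝ) ^ 2 * (∑ z ∈ S ×ˢ S, q z.1 * q z.2 * k z.1 z.2) ^ 2 := by rw [mul_pow, h2]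
    _ ≤ (#S : ℝ) ^ 2 * ((#S : ℝ) ^ 2 * fourCycles S g) := by gcongr
    _ = _ := by ring

/-- The deviation of colour `a` from its expected frequency `x a` on increasing pairs. -/
def dev {V C : Type} [LT V] [DecidableRel (α := V) (· < ·)] [DecidableEq C] (x : C → ℝ)
    (φ : V → V → C) (a : C) (u v : V) : ℝ :=
  if u < v then (if φ u v = a then 1 else 0) - x a else 0

/-- First moment method: colour the pairs independently with distribution `x`. Only degenerate
four-cycles contribute to the expected number of four-cycles of the deviations. -/
lemma exists_colouring_fin {C : Type} [Fintype C] [DecidableEq C] {x : C → ℝ}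
    (hx0 : ∀ a, 0 ≤ x a) (hx : ∑ a, x a = 1) (n : ℕ) :
    ∃ φ : Fin n → Fin n → C, ∀ a,
      fourCycles univ (dev x φ a) ≤ 2 * Fintype.card C * (n : ℝ) ^ 3 := by
  have hx1 : ∀ a, x a ≤ 1 := fun a => hx ▸ single_le_sum (fun b _ => hx0 b) (mem_univ a)
  set W : (Fin n × Fin n → C) → ℝ := fun φ => ∏ e, x (φ e) with hW
  have hW0 : ∀ φ, 0 ≤ W φ := fun φ => prod_nonneg fun e _ => hx0 _
  have hW1 : ∑ φ, W φ = 1 := sum_weight hx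
  set D : C → (Fin n × Fin n → C) → Fin n → Fin n → ℝ :=
    fun a φ => dev x (fun u v => φ (u, v)) a with hD
  have hDabs : ∀ a φ u v, |D a φ u v| ≤ 1 := by
    intro a φ u v
    simp only [hD, dev]
    have := hx0 a
    have := hx1 a
    split_ifs <;> rw [abs_le] <;> constructor <;> linarith
  have hquad : ∀ a u u' v v', ∑ φ, W φ * (D a φ u v * D a φ u v' * (D a φ u' v * D a φ u' v'))
      ≤ (if u = u' then 1 else 0) + if v = v' then 1 else 0 := by
    intro a u u' v v'
    by_cases hdeg : u = u' ∨ v = v'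
    · have h1 : ∑ φ, W φ * (D a φ u v * D a φ u v' * (D a φ u' v * D a φ u' v')) ≤ 1 := by
        rw [← hW1]
        refine sum_le_sum fun φ _ => mul_le_of_le_one_right (hW0 φ) ?_
        refine (le_abs_self _).trans ?_
        rw [abs_mul, abs_mul, abs_mul]
        have hd := hDabs a φ
        exact mul_le_one₀ (mul_le_one₀ (hd _ _) (abs_nonneg _) (hd _ _)) (by positivity)
          (mul_le_one₀ (hd _ _) (abs_nonneg _) (hd _ _))
      refine h1.trans ?_
      rcases hdeg with h | h
      · rw [if_pos h]; split_ifs <;> norm_num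
      · rw [if_pos h]; split_ifs <;> norm_num
    · push Not at hdeg
      refine le_of_eq_of_le (b := 0) ?_ (by positivity)
      set g : C → ℝ := fun c => if u < v then (if c = a then 1 else 0) - x a else 0 with hg
      have := sum_weight_mul_eq_zero (x := x) (u, v) g ?_
        (fun φ => D a φ u v' * (D a φ u' v * D a φ u' v')) ?_
      · rw [← this]
        refine sum_congr rfl fun φ _ => ?_
        simp only [hW, hg, hD, dev]
        ring
      · simp only [hg]
        split_ifs
        · simp [mul_sub, ← sum_mul, hx]
        · simp
      · intro φ c
        simp only [hD, dev]
        rw [Function.update_of_ne, Function.update_of_ne, Function.update_of_ne] <;>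
          simp [Ne.symm hdeg.1, Ne.symm hdeg.2]
  set B : ℝ := 2 * Fintype.card C * (n : ℝ) ^ 3 with hB
  have hE : ∑ φ, W φ * ∑ a, fourCycles univ (D a φ) ≤ B := by
    calc ∑ φ, W φ * ∑ a, fourCycles univ (D a φ)
        = ∑ a, ∑ u, ∑ u', ∑ v, ∑ v', ∑ φ,
            W φ * (D a φ u v * D a φ u v' * (D a φ u' v * D a φ u' v')) := by
          unfold fourCycles
          simp_rw [mul_sum]
          rw [sum_comm]
          refine sum_congr rfl fun a _ => ?_
          rw [sum_comm]
          refine sum_congr rfl fun u _ => ?_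
          rw [sum_comm]
          refine sum_congr rfl fun u' _ => ?_
          rw [sum_comm]
          refine sum_congr rfl fun v _ => ?_
          rw [sum_comm]
      _ ≤ ∑ a : C, ∑ u : Fin n, ∑ u' : Fin n, ∑ v : Fin n, ∑ v' : Fin n,
            ((if u = u' then (1 : ℝ) else 0) + if v = v' then 1 else 0) := by
          gcongr with a _ u _ u' _ v _ v' _
          exact hquad a u u' v v'
      _ = B := by
          simp [sum_add_distrib, hB]
          ring
  by_contra hcon
  push Not at hcon
  have hbig : ∀ φ, B < ∑ a, fourCycles univ (D a φ) := fun φ => by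
    obtain ⟨a, ha⟩ := hcon fun u v => φ (u, v)
    exact ha.trans_le (single_le_sum (f := fun a => fourCycles univ (D a φ))
      (fun b _ => fourCycles_nonneg _ _) (mem_univ a))
  obtain ⟨φ₀, hφ₀⟩ : ∃ φ, W φ ≠ 0 := by
    by_contra h
    push Not at h
    simp [h] at hW1
  have hlt : ∑ φ, W φ * B < ∑ φ, W φ * ∑ a, fourCycles univ (D a φ) :=
    sum_lt_sum (fun φ _ => mul_le_mul_of_nonneg_left (hbig φ).le (hW0 φ))
      ⟨φ₀, mem_univ _, mul_lt_mul_of_pos_left (hbig φ₀) ((hW0 φ₀).lt_of_ne hφ₀.symm)⟩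
  rw [← sum_mul, hW1, one_mul] at hlt
  linarith

lemma exists_colouring {C : Type} [Fintype C] [DecidableEq C] {x : C → ℝ}
    (hx0 : ∀ a, 0 ≤ x a) (hx : ∑ a, x a = 1) (n : ℕ) :
    ∃ φ : ℕ → ℕ → C, ∀ a,
      fourCycles (range n) (dev x φ a) ≤ 2 * Fintype.card C * (n : ℝ) ^ 3 := by
  obtain ⟨φ, hφ⟩ := exists_colouring_fin hx0 hx n
  obtain ⟨c₀⟩ : Nonempty C := by
    by_contra h
    rw [not_nonempty_iff] at h
    simp at hx
  refine ⟨fun u v => if h : u < n ∧ v < n then φ ⟨u, h.1⟩ ⟨v, h.2⟩ else c₀, fun a => ?_⟩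
  refine le_of_eq_of_le ?_ (hφ a)
  simp only [fourCycles, Finset.sum_range, dev]
  simp

/-- A weight of small cut norm contributes little to weighted triangle counts. -/
lemma abs_triangle_le {n : ℕ} {κ : ℝ} {g : ℕ → ℕ → ℝ}
    (hg : ∀ p q : ℕ → ℝ, (∀ u, 0 ≤ p u ∧ p u ≤ 1) → (∀ u, 0 ≤ q u ∧ q u ≤ 1) →
      |∑ u ∈ range n, ∑ v ∈ range n, g u v * p u * q v| ≤ κ)
    {h k : ℕ → ℕ → ℝ} (hh : ∀ u v, 0 ≤ h u v ∧ h u v ≤ 1) (hk : ∀ u v, 0 ≤ k u v ∧ k u v ≤ 1)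
    {X Y Z : Finset ℕ} (hX : X ⊆ range n) (hY : Y ⊆ range n) (hZ : Z ⊆ range n) :
    |∑ u ∈ X, ∑ v ∈ Y, ∑ w ∈ Z, g u v * h v w * k u w| ≤ n * κ := by
  have hκ : 0 ≤ κ := (abs_nonneg _).trans (hg 0 0 (by simp) (by simp))
  have hw : ∀ w, |∑ u ∈ X, ∑ v ∈ Y, g u v * h v w * k u w| ≤ κ := by
    intro w
    refine le_of_eq_of_le ?_ (hg (fun u => if u ∈ X then k u w else 0)
      (fun v => if v ∈ Y then h v w else 0) ?_ ?_)
    · congr 1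
      rw [← inter_eq_right.2 hX, ← inter_eq_right.2 hY, ← sum_ite_mem]
      refine sum_congr rfl fun u hu => ?_
      rw [← sum_ite_mem, inter_eq_right.2 hX, inter_eq_right.2 hY]
      split_ifs with h1
      · refine sum_congr rfl fun v _ => ?_
        split_ifs
        · ring
        · simp
      · simp
    · intro u
      split_ifs
      · exact hk u w
      · simp
    · intro u
      split_ifs
      · exact hh u w
      · simp
  have hsw : ∑ u ∈ X, ∑ v ∈ Y, ∑ w ∈ Z, g u v * h v w * k u w
      = ∑ w ∈ Z, ∑ u ∈ X, ∑ v ∈ Y, g u v * h v w * k u w := by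
    rw [sum_comm (s := Z)]
    exact sum_congr rfl fun _ _ => sum_comm
  rw [hsw]
  refine (abs_sum_le_sum_abs _ _).trans ((sum_le_sum fun w _ => hw w).trans ?_)
  rw [sum_const, nsmul_eq_mul]
  have : (#Z : ℝ) ≤ n := by
    have := card_le_card hZ
    rw [card_range] at this
    exact_mod_cast this
  gcongr

/-! ### The random 3-graph of a palette -/

/-- If all colour deviations have small cut norm, the number of increasing triples with pattern
in `P` is at least the expected one up to a small error. -/
lemma pattern_count {C : Type} [DecidableEq C] {x : C → ℝ} (hx0 : ∀ a, 0 ≤ x a)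
    (hx1 : ∀ a, x a ≤ 1) {φ : ℕ → ℕ → C} {n : ℕ} {κ : ℝ}
    (hcut : ∀ a, ∀ p q : ℕ → ℝ, (∀ u, 0 ≤ p u ∧ p u ≤ 1) → (∀ u, 0 ≤ q u ∧ q u ≤ 1) →
      |∑ u ∈ range n, ∑ v ∈ range n, dev x φ a u v * p u * q v| ≤ κ)
    (P : Finset (C × C × C)) {X Y Z : Finset ℕ} (hX : X ⊆ range n) (hY : Y ⊆ range n)
    (hZ : Z ⊆ range n) :
    lamPal P x * (∑ u ∈ X, ∑ v ∈ Y, ∑ w ∈ Z, if u < v ∧ v < w then (1 : ℝ) else 0)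
        - #P * (3 * (n * κ)) ≤
      ∑ u ∈ X, ∑ v ∈ Y, ∑ w ∈ Z,
        if u < v ∧ v < w ∧ (φ u v, φ v w, φ u w) ∈ P then (1 : ℝ) else 0 := by
  set c : C → ℕ → ℕ → ℝ := fun a u v => if u < v ∧ φ u v = a then 1 else 0 with hc
  set m : C → ℕ → ℕ → ℝ := fun a u v => if u < v then x a else 0 with hm
  have hcm : ∀ a u v, c a u v = m a u v + dev x φ a u v := fun a u v => by
    simp only [hc, hm, dev]
    by_cases h : u < v <;> simp [h]
  have hc01 : ∀ a u v, 0 ≤ c a u v ∧ c a u v ≤ 1 := fun a u v => by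
    simp only [hc]
    split_ifs <;> norm_num
  have hm01 : ∀ a u v, 0 ≤ m a u v ∧ m a u v ≤ 1 := fun a u v => by
    simp only [hm]
    split_ifs
    · exact ⟨hx0 a, hx1 a⟩
    · norm_num
  have hone : ∀ p : C × C × C,
      ∑ u ∈ X, ∑ v ∈ Y, ∑ w ∈ Z, m p.1 u v * m p.2.1 v w * m p.2.2 u w - 3 * (n * κ) ≤
        ∑ u ∈ X, ∑ v ∈ Y, ∑ w ∈ Z, c p.1 u v * c p.2.1 v w * c p.2.2 u w := by
    rintro ⟨a, b, d⟩
    dsimp only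
    have e1 := (abs_le.1 (abs_triangle_le (hcut a) (hc01 b) (hc01 d) hX hY hZ)).1
    have e2 := (abs_le.1 (abs_triangle_le (hcut b) (fun w u => hc01 d u w)
      (fun v u => hm01 a u v) hY hZ hX)).1
    have e3 := (abs_le.1 (abs_triangle_le (hcut d) (fun w v => hm01 b v w)
      (fun u v => hm01 a u v) hX hZ hY)).1
    have r2 : ∑ v ∈ Y, ∑ w ∈ Z, ∑ u ∈ X, dev x φ b v w * c d u w * m a u v
        = ∑ u ∈ X, ∑ v ∈ Y, ∑ w ∈ Z, dev x φ b v w * c d u w * m a u v := by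
      rw [sum_comm (s := X)]
      exact sum_congr rfl fun _ _ => sum_comm
    have r3 : ∑ u ∈ X, ∑ w ∈ Z, ∑ v ∈ Y, dev x φ d u w * m b v w * m a u v
        = ∑ u ∈ X, ∑ v ∈ Y, ∑ w ∈ Z, dev x φ d u w * m b v w * m a u v :=
      sum_congr rfl fun _ _ => sum_comm
    have tel : ∑ u ∈ X, ∑ v ∈ Y, ∑ w ∈ Z, c a u v * c b v w * c d u w =
        ∑ u ∈ X, ∑ v ∈ Y, ∑ w ∈ Z, m a u v * m b v w * m d u w
        + ∑ u ∈ X, ∑ v ∈ Y, ∑ w ∈ Z, dev x φ a u v * c b v w * c d u w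
        + ∑ u ∈ X, ∑ v ∈ Y, ∑ w ∈ Z, dev x φ b v w * c d u w * m a u v
        + ∑ u ∈ X, ∑ v ∈ Y, ∑ w ∈ Z, dev x φ d u w * m b v w * m a u v := by
      simp_rw [← sum_add_distrib]
      refine sum_congr rfl fun u _ => sum_congr rfl fun v _ => sum_congr rfl fun w _ => ?_
      rw [hcm a, hcm b, hcm d]
      ring
    rw [r2] at e2
    rw [r3] at e3
    linarith
  have hpat : ∀ u v w, (if u < v ∧ v < w ∧ (φ u v, φ v w, φ u w) ∈ P then (1 : ℝ) else 0)
      = ∑ p ∈ P, c p.1 u v * c p.2.1 v w * c p.2.2 u w := by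
    intro u v w
    by_cases h : u < v ∧ v < w
    · have : ∀ p : C × C × C, c p.1 u v * c p.2.1 v w * c p.2.2 u w
          = if (φ u v, φ v w, φ u w) = p then 1 else 0 := by
        rintro ⟨a, b, d⟩
        simp only [hc, h.1, h.2, h.1.trans h.2, true_and, Prod.mk.injEq, ← ite_and, mul_ite,
          mul_one, mul_zero]
        congr 1
        simp only [eq_iff_iff]
        tauto
      simp_rw [this, sum_ite_eq]
      simp [h.1, h.2]
    · rw [if_neg (by tauto), eq_comm]
      refine sum_eq_zero fun p _ => ?_
      by_cases h1 : u < v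
      · have h2 : ¬ v < w := fun h2 => h ⟨h1, h2⟩
        simp [hc, h2]
      · simp [hc, h1]
  have hmm : ∀ (p : C × C × C) u v w, m p.1 u v * m p.2.1 v w * m p.2.2 u w
      = x p.1 * x p.2.1 * x p.2.2 * if u < v ∧ v < w then (1 : ℝ) else 0 := by
    intro p u v w
    by_cases h1 : u < v
    · by_cases h2 : v < w
      · simp [hm, h1, h2, h1.trans h2]
      · simp [hm, h2]
    · simp [hm, h1]
  calc _ = ∑ p ∈ P, (∑ u ∈ X, ∑ v ∈ Y, ∑ w ∈ Z, m p.1 u v * m p.2.1 v w * m p.2.2 u w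
        - 3 * (n * κ)) := by
        rw [sum_sub_distrib, sum_const, nsmul_eq_mul, lamPal, sum_mul]
        congr 1
        refine sum_congr rfl fun p _ => ?_
        simp_rw [hmm, ← mul_sum]
    _ ≤ ∑ p ∈ P, ∑ u ∈ X, ∑ v ∈ Y, ∑ w ∈ Z, c p.1 u v * c p.2.1 v w * c p.2.2 u w :=
        sum_le_sum fun p _ => hone p
    _ = _ := by
        simp_rw [hpat]
        rw [sum_comm]
        refine sum_congr rfl fun u _ => ?_
        rw [sum_comm]
        refine sum_congr rfl fun v _ => ?_
        rw [sum_comm]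

/-- A sum over triples in all six orders, with each order summed in its own nesting. -/
lemma sum_six (X Y Z : Finset ℕ) (h : ℕ → ℕ → ℕ → ℝ) :
    ∑ x ∈ X, ∑ y ∈ Y, ∑ z ∈ Z, (h x y z + h x z y + h y x z + h y z x + h z x y + h z y x)
      = ∑ x ∈ X, ∑ y ∈ Y, ∑ z ∈ Z, h x y z + ∑ x ∈ X, ∑ z ∈ Z, ∑ y ∈ Y, h x z y
        + ∑ y ∈ Y, ∑ x ∈ X, ∑ z ∈ Z, h y x z + ∑ y ∈ Y, ∑ z ∈ Z, ∑ x ∈ X, h y z x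
        + ∑ z ∈ Z, ∑ x ∈ X, ∑ y ∈ Y, h z x y + ∑ z ∈ Z, ∑ y ∈ Y, ∑ x ∈ X, h z y x := by
  simp_rw [sum_add_distrib]
  congr 1; congr 1; congr 1; congr 1; congr 1
  · exact sum_congr rfl fun _ _ => sum_comm
  · exact sum_comm
  · rw [sum_comm]
    exact sum_congr rfl fun _ _ => sum_comm
  · rw [sum_comm (s := Z)]
    exact sum_congr rfl fun _ _ => sum_comm
  · calc _ = ∑ y ∈ Y, ∑ x ∈ X, ∑ z ∈ Z, h z y x := sum_comm
      _ = ∑ y ∈ Y, ∑ z ∈ Z, ∑ x ∈ X, h z y x := sum_congr rfl fun _ _ => sum_comm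
      _ = _ := sum_comm

/-- The 3-graph on `range n` whose edges are the increasing triples with pattern in `P`. -/
def patGraph {C : Type} [DecidableEq C] (P : Finset (C × C × C)) (φ : ℕ → ℕ → C) (n : ℕ) :
    ThreeGraph where
  verts := range n
  edges := ((range n ×ˢ range n ×ˢ range n).filter fun p =>
    p.1 < p.2.1 ∧ p.2.1 < p.2.2 ∧ (φ p.1 p.2.1, φ p.2.1 p.2.2, φ p.1 p.2.2) ∈ P).image
      fun p => {p.1, p.2.1, p.2.2}
  edge_sub := by
    intro e he
    obtain ⟨⟨u, v, w⟩, hp, rfl⟩ := mem_image.1 he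
    simp only [mem_filter, mem_product] at hp
    intro z hz
    simp only [mem_insert, mem_singleton] at hz
    rcases hz with rfl | rfl | rfl
    · exact hp.1.1
    · exact hp.1.2.1
    · exact hp.1.2.2
  edge_card := by
    intro e he
    obtain ⟨⟨u, v, w⟩, hp, rfl⟩ := mem_image.1 he
    simp only [mem_filter, mem_product] at hp
    rw [card_eq_three]
    exact ⟨u, v, w, by omega, by omega, by omega, rfl⟩

lemma mem_patGraph {C : Type} [DecidableEq C] {P : Finset (C × C × C)} {φ : ℕ → ℕ → C} {n : ℕ}
    {u v w : ℕ} (huv : u < v) (hvw : v < w) :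
    {u, v, w} ∈ (patGraph P φ n).edges ↔ w < n ∧ (φ u v, φ v w, φ u w) ∈ P := by
  constructor
  · intro h
    obtain ⟨⟨a, b, c⟩, hp, he⟩ := mem_image.1 h
    simp only [mem_filter, mem_product, mem_range] at hp he
    have ha : a ∈ ({u, v, w} : Finset ℕ) := he ▸ by simp
    have hb : b ∈ ({u, v, w} : Finset ℕ) := he ▸ by simp
    have hc : c ∈ ({u, v, w} : Finset ℕ) := he ▸ by simp
    simp only [mem_insert, mem_singleton] at ha hb hc
    obtain ⟨rfl, rfl, rfl⟩ : a = u ∧ b = v ∧ c = w := by omega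
    exact ⟨hp.1.2.2, hp.2.2.2⟩
  · rintro ⟨hw, hP⟩
    refine mem_image.2 ⟨(u, v, w), ?_, rfl⟩
    simp only [mem_filter, mem_product, mem_range]
    exact ⟨⟨by omega, by omega, hw⟩, huv, hvw, hP⟩

lemma sat_patGraph {C : Type} [DecidableEq C] (P : Finset (C × C × C)) (φ : ℕ → ℕ → C) (n : ℕ) :
    Sat P (patGraph P φ n) :=
  ⟨id, φ, Function.injective_id.injOn, fun _ _ _ h h1 h2 => ((mem_patGraph h1 h2).1 h).2⟩

lemma eVVV_patGraph {C : Type} [DecidableEq C] (P : Finset (C × C × C)) (φ : ℕ → ℕ → C) (n : ℕ)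
    {X Y Z : Finset ℕ} (hX : X ⊆ range n) (hY : Y ⊆ range n) (hZ : Z ⊆ range n)
    {h : ℕ → ℕ → ℕ → ℝ}
    (hh : h = fun u v w => if u < v ∧ v < w ∧ (φ u v, φ v w, φ u w) ∈ P then 1 else 0) :
    ∑ x ∈ X, ∑ y ∈ Y, ∑ z ∈ Z, (h x y z + h x z y + h y x z + h y z x + h z x y + h z y x)
      ≤ eVVV (patGraph P φ n) X Y Z := by
  rw [eVVV, card_filter, Nat.cast_sum, sum_product]
  simp_rw [sum_product]
  refine sum_le_sum fun x hx => sum_le_sum fun y hy => sum_le_sum fun z hz => ?_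
  have hx' := mem_range.1 (hX hx)
  have hy' := mem_range.1 (hY hy)
  have hz' := mem_range.1 (hZ hz)
  have key : ∀ u v w : ℕ, u < n → v < n → w < n → ({u, v, w} : Finset ℕ) = {x, y, z} →
      u < v → v < w → h u v w ≤
        ((if ({x, y, z} : Finset ℕ) ∈ (patGraph P φ n).edges then 1 else 0 : ℕ) : ℝ) := by
    intro u v w hu hv hw he huv hvw
    rw [← he]
    simp [mem_patGraph huv hvw, hh, huv, hvw, hw]
  have zero : ∀ u v w : ℕ, ¬ (u < v ∧ v < w) → h u v w = 0 := by
    intro u v w huv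
    rw [hh]
    exact if_neg (by tauto)
  have hnn : (0 : ℝ) ≤
      ((if ({x, y, z} : Finset ℕ) ∈ (patGraph P φ n).edges then 1 else 0 : ℕ) : ℝ) := by
    positivity
  by_cases h1 : x < y ∧ y < z
  · rw [zero x z y, zero y x z, zero y z x, zero z x y, zero z y x] <;> try omega
    simpa using key x y z hx' hy' hz' rfl h1.1 h1.2
  by_cases h2 : x < z ∧ z < y
  · rw [zero x y z, zero y x z, zero y z x, zero z x y, zero z y x] <;> try omega
    have he : ({x, z, y} : Finset ℕ) = {x, y, z} := by
      ext; simp only [mem_insert, mem_singleton]; tauto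
    simpa using key x z y hx' hz' hy' he h2.1 h2.2
  by_cases h3 : y < x ∧ x < z
  · rw [zero x y z, zero x z y, zero y z x, zero z x y, zero z y x] <;> try omega
    have he : ({y, x, z} : Finset ℕ) = {x, y, z} := by
      ext; simp only [mem_insert, mem_singleton]; tauto
    simpa using key y x z hy' hx' hz' he h3.1 h3.2
  by_cases h4 : y < z ∧ z < x
  · rw [zero x y z, zero x z y, zero y x z, zero z x y, zero z y x] <;> try omega
    have he : ({y, z, x} : Finset ℕ) = {x, y, z} := by
      ext; simp only [mem_insert, mem_singleton]; tauto
    simpa using key y z x hy' hz' hx' he h4.1 h4.2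
  by_cases h5 : z < x ∧ x < y
  · rw [zero x y z, zero x z y, zero y x z, zero y z x, zero z y x] <;> try omega
    have he : ({z, x, y} : Finset ℕ) = {x, y, z} := by
      ext; simp only [mem_insert, mem_singleton]; tauto
    simpa using key z x y hz' hx' hy' he h5.1 h5.2
  by_cases h6 : z < y ∧ y < x
  · rw [zero x y z, zero x z y, zero y x z, zero y z x, zero z x y] <;> try omega
    have he : ({z, y, x} : Finset ℕ) = {x, y, z} := by
      ext; simp only [mem_insert, mem_singleton]; tauto
    simpa using key z y x hz' hy' hx' he h6.1 h6.2
  rw [zero x y z h1, zero x z y h2, zero y x z h3, zero y z x h4, zero z x y h5, zero z y x h6]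
  simpa using hnn

/-- Almost all triples of `X × Y × Z` have distinct coordinates. -/
lemma card_le_orders {n : ℕ} {X Y Z : Finset ℕ} (hX : X ⊆ range n) (hY : Y ⊆ range n)
    (hZ : Z ⊆ range n) {h : ℕ → ℕ → ℕ → ℝ}
    (hh : h = fun u v w => if u < v ∧ v < w then 1 else 0) :
    (#X : ℝ) * #Y * #Z - 3 * (n : ℝ) ^ 2 ≤
      ∑ x ∈ X, ∑ y ∈ Y, ∑ z ∈ Z, (h x y z + h x z y + h y x z + h y z x + h z x y + h z y x) := by
  have hc : ∀ {S : Finset ℕ}, S ⊆ range n → #S ≤ n := fun {S} hS => by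
    simpa using card_le_card hS
  have hpt : ∀ x y z : ℕ, (1 : ℝ) ≤ (h x y z + h x z y + h y x z + h y z x + h z x y + h z y x)
      + (((if x = y then 1 else 0) + if x = z then 1 else 0) + if y = z then 1 else 0) := by
    intro x y z
    have h0 : ∀ u v w, 0 ≤ h u v w := fun u v w => by rw [hh]; positivity
    have h1 : ∀ u v w, u < v → v < w → h u v w = 1 := fun u v w a b => by
      rw [hh]; exact if_pos ⟨a, b⟩
    have := h0 x y z; have := h0 x z y; have := h0 y x z
    have := h0 y z x; have := h0 z x y; have := h0 z y x
    rcases lt_trichotomy x y with a | a | a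
    · rcases lt_trichotomy y z with b | b | b
      · rw [h1 x y z a b]; split_ifs <;> linarith
      · rw [if_pos b]; split_ifs <;> linarith
      · rcases lt_trichotomy x z with c | c | c
        · rw [h1 x z y c b]; split_ifs <;> linarith
        · rw [if_pos c]; split_ifs <;> linarith
        · rw [h1 z x y c a]; split_ifs <;> linarith
    · rw [if_pos a]; split_ifs <;> linarith
    · rcases lt_trichotomy y z with b | b | b
      · rcases lt_trichotomy x z with c | c | c
        · rw [h1 y x z a c]; split_ifs <;> linarith
        · rw [if_pos c]; split_ifs <;> linarith
        · rw [h1 y z x b c]; split_ifs <;> linarith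
      · rw [if_pos b]; split_ifs <;> linarith
      · rw [h1 z y x b a]; split_ifs <;> linarith
  have hsum := sum_le_sum fun x (_ : x ∈ X) => sum_le_sum fun y (_ : y ∈ Y) =>
    sum_le_sum fun z (_ : z ∈ Z) => hpt x y z
  have hdeg : ∑ x ∈ X, ∑ y ∈ Y, ∑ z ∈ Z, (((if x = y then (1 : ℝ) else 0)
      + if x = z then 1 else 0) + if y = z then 1 else 0) ≤ 3 * (n : ℝ) ^ 2 := by
    have hite : ∀ (S : Finset ℕ) (a : ℕ), ∑ b ∈ S, (if a = b then (1 : ℝ) else 0) ≤ 1 := by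
      intro S a
      rw [sum_ite_eq]
      split_ifs <;> norm_num
    have s1 : ∑ x ∈ X, ∑ y ∈ Y, ∑ z ∈ Z, (if x = y then (1 : ℝ) else 0) ≤ n ^ 2 := by
      calc _ = ∑ x ∈ X, (∑ y ∈ Y, if x = y then (1 : ℝ) else 0) * #Z := by
            simp_rw [sum_const, nsmul_eq_mul, sum_mul, mul_comm]
        _ ≤ ∑ x ∈ X, 1 * (n : ℝ) := sum_le_sum fun x _ => by
            gcongr
            · exact hite Y x
            · exact hc hZ
        _ ≤ n ^ 2 := by
            rw [sum_const, nsmul_eq_mul, one_mul, sq]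
            gcongr
            exact hc hX
    have s2 : ∑ x ∈ X, ∑ y ∈ Y, ∑ z ∈ Z, (if x = z then (1 : ℝ) else 0) ≤ n ^ 2 := by
      calc _ ≤ ∑ x ∈ X, ∑ y ∈ Y, (1 : ℝ) :=
            sum_le_sum fun x _ => sum_le_sum fun y _ => hite Z x
        _ = #X * #Y := by simp
        _ ≤ n ^ 2 := by
            rw [sq]
            gcongr
            exacts [hc hX, hc hY]
    have s3 : ∑ x ∈ X, ∑ y ∈ Y, ∑ z ∈ Z, (if y = z then (1 : ℝ) else 0) ≤ n ^ 2 := by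
      calc _ ≤ ∑ x ∈ X, ∑ y ∈ Y, (1 : ℝ) :=
            sum_le_sum fun x _ => sum_le_sum fun y _ => hite Z y
        _ = #X * #Y := by simp
        _ ≤ n ^ 2 := by
            rw [sq]
            gcongr
            exacts [hc hX, hc hY]
    simp_rw [sum_add_distrib]
    linarith
  have hsplit : ∀ f g : ℕ → ℕ → ℕ → ℝ, ∑ x ∈ X, ∑ y ∈ Y, ∑ z ∈ Z, (f x y z + g x y z)
      = ∑ x ∈ X, ∑ y ∈ Y, ∑ z ∈ Z, f x y z + ∑ x ∈ X, ∑ y ∈ Y, ∑ z ∈ Z, g x y z := by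
    intro f g
    simp_rw [sum_add_distrib]
  rw [hsplit] at hsum
  simp only [sum_const, nsmul_eq_mul, mul_one, ← mul_assoc] at hsum
  linarith

/-- Random colourings give dense 3-graphs satisfying `P`. -/
lemma exists_dense {C : Type} [Fintype C] [DecidableEq C] (P : Finset (C × C × C)) {x : C → ℝ}
    (hx0 : ∀ a, 0 ≤ x a) (hx : ∑ a, x a = 1) (hL0 : 0 ≤ lamPal P x) (hL1 : lamPal P x ≤ 1)
    {η : ℝ} (hη : 0 < η) (n₀ : ℕ) :
    ∃ H : ThreeGraph, n₀ ≤ #H.verts ∧ Sat P H ∧ IsDenseVVV H (lamPal P x) η := by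
  have hx1 : ∀ a, x a ≤ 1 := fun a => hx ▸ single_le_sum (fun b _ => hx0 b) (mem_univ a)
  set ε : ℝ := η / (2 * (18 * #P + 1)) with hε
  have hε0 : 0 < ε := by positivity
  obtain ⟨n₁, hn₁⟩ := exists_nat_ge (6 / η)
  obtain ⟨n₂, hn₂⟩ := exists_nat_ge (2 * Fintype.card C / ε ^ 4)
  set n : ℕ := max n₀ (max n₁ n₂) with hn
  have h1 : 6 / η ≤ n := hn₁.trans (by exact_mod_cast (le_max_left _ _).trans (le_max_right _ _))
  have h2 : 2 * Fintype.card C / ε ^ 4 ≤ n :=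
    hn₂.trans (by exact_mod_cast (le_max_right _ _).trans (le_max_right _ _))
  rw [div_le_iff₀ hη] at h1
  rw [div_le_iff₀ (by positivity)] at h2
  obtain ⟨φ, hφ⟩ := exists_colouring hx0 hx n
  have hcut : ∀ a, ∀ p q : ℕ → ℝ, (∀ u, 0 ≤ p u ∧ p u ≤ 1) → (∀ u, 0 ≤ q u ∧ q u ≤ 1) →
      |∑ u ∈ range n, ∑ v ∈ range n, dev x φ a u v * p u * q v| ≤ ε * (n : ℝ) ^ 2 := by
    intro a p q hp hq
    have := cut_pow_four_le (range n) (dev x φ a) hp hq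
    rw [card_range] at this
    refine le_of_pow_le_pow_left₀ (n := 4) (by norm_num) (by positivity) ?_
    rw [Even.pow_abs (by decide)]
    calc _ ≤ (n : ℝ) ^ 4 * fourCycles (range n) (dev x φ a) := this
      _ ≤ (n : ℝ) ^ 4 * (2 * Fintype.card C * (n : ℝ) ^ 3) := by gcongr; exact hφ a
      _ = (2 * Fintype.card C) * (n : ℝ) ^ 7 := by ring
      _ ≤ (n * ε ^ 4) * (n : ℝ) ^ 7 := by gcongr
      _ = _ := by ring
  refine ⟨patGraph P φ n, ?_, sat_patGraph P φ n, ?_⟩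
  · change n₀ ≤ #(range n)
    rw [card_range]
    exact le_max_left _ _
  intro X Y Z hX hY hZ
  change X ⊆ range n at hX
  change Y ⊆ range n at hY
  change Z ⊆ range n at hZ
  change _ ≥ _ - η * (#(range n) : ℝ) ^ 3
  rw [card_range]
  have hlow := eVVV_patGraph P φ n hX hY hZ rfl
  have hord := card_le_orders hX hY hZ rfl
  rw [sum_six] at hlow hord
  have pc := fun {A B D : Finset ℕ} => pattern_count (X := A) (Y := B) (Z := D) hx0 hx1 hcut P
  have p1 := pc hX hY hZ
  have p2 := pc hX hZ hY
  have p3 := pc hY hX hZ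
  have p4 := pc hY hZ hX
  have p5 := pc hZ hX hY
  have p6 := pc hZ hY hX
  have hord' := mul_le_mul_of_nonneg_left hord hL0
  simp only [mul_add, mul_sub] at hord'
  have herr : lamPal P x * (3 * (n : ℝ) ^ 2) + 6 * (#P * (3 * (n * (ε * (n : ℝ) ^ 2))))
      ≤ η * (n : ℝ) ^ 3 := by
    have e1 : lamPal P x * (3 * (n : ℝ) ^ 2) ≤ η / 2 * (n : ℝ) ^ 3 := by
      calc lamPal P x * (3 * (n : ℝ) ^ 2) ≤ 1 * (3 * (n : ℝ) ^ 2) := by gcongr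
        _ = 6 * ((n : ℝ) ^ 2 / 2) := by ring
        _ ≤ (n * η) * ((n : ℝ) ^ 2 / 2) := by gcongr
        _ = _ := by ring
    have e2 : (18 * #P + 1) * ε = η / 2 := by
      rw [hε]
      field_simp
    have e3 : 18 * #P * ε ≤ η / 2 := by linarith
    have e4 : 18 * #P * ε * (n : ℝ) ^ 3 ≤ η / 2 * (n : ℝ) ^ 3 := by gcongr
    linarith
  linarith

/-! ### Uniform Turán densities of palette families -/

lemma lamPal_le_one {C : Type} [Fintype C] [DecidableEq C] (P : Finset (C × C × C)) {x : C → ℝ}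
    (hx0 : ∀ a, 0 ≤ x a) (hx : ∑ a, x a = 1) : lamPal P x ≤ 1 := by
  calc lamPal P x ≤ lamPal univ x :=
        sum_le_sum_of_subset_of_nonneg (subset_univ _) fun p _ _ =>
          mul_nonneg (mul_nonneg (hx0 _) (hx0 _)) (hx0 _)
    _ = 1 := by
        simp_rw [lamPal, Fintype.sum_prod_type, ← mul_sum, hx, mul_one, ← mul_sum, hx, mul_one, hx]

/-- The graphs not satisfying a palette form a family whose uniform Turán density is the maximum
of the palette polynomial. -/
lemma piVVV_palette {C : Type} [Fintype C] [DecidableEq C] (P : Finset (C × C × C)) {x : C → ℝ}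
    (hx0 : ∀ a, 0 ≤ x a) (hx : ∑ a, x a = 1)
    (hmax : ∀ y : C → ℝ, (∀ a, 0 ≤ y a) → ∑ a, y a = 1 → lamPal P y ≤ lamPal P x) :
    piVVV {F | ¬ Sat P F} = lamPal P x := by
  have h0 : 0 ≤ lamPal P x :=
    sum_nonneg fun p _ => mul_nonneg (mul_nonneg (hx0 _) (hx0 _)) (hx0 _)
  have h1 := lamPal_le_one P hx0 hx
  refine IsGreatest.csSup_eq ⟨⟨h0, h1, fun η hη n => ?_⟩, fun d hd => ?_⟩
  · obtain ⟨H, hn, hs, hd⟩ := exists_dense P hx0 hx h0 h1 hη n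
    exact ⟨H, hn, (free_iff_sat P H).2 hs, hd⟩
  · refine density_le P hmax fun η hη n => ?_
    obtain ⟨H, hn, hs, hd⟩ := hd.2.2 η hη n
    exact ⟨H, hn, (free_iff_sat P H).1 hs, hd⟩

/-! ### A palette with a prescribed Lagrangian -/

lemma card_six_orderings {α : Type} [DecidableEq α] {a b c : α} (hab : a ≠ b) (hac : a ≠ c)
    (hbc : b ≠ c) :
    #({(a, b, c), (a, c, b), (b, a, c), (b, c, a), (c, a, b), (c, b, a)} : Finset (α × α × α))
      = 6 := by
  repeat rw [card_insert_of_notMem (by simp [hab, hac, hbc, hab.symm, hac.symm, hbc.symm])]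
  rw [card_singleton]

lemma image_of_mem_orderings {α : Type} [DecidableEq α] {a b c : α} (f : α → ℕ) {p : α × α × α}
    (hp : p ∈ ({(a, b, c), (a, c, b), (b, a, c), (b, c, a), (c, a, b), (c, b, a)} :
      Finset (α × α × α))) : ({f p.1, f p.2.1, f p.2.2} : Finset ℕ) = {f a, f b, f c} := by
  simp only [mem_insert, mem_singleton] at hp
  rcases hp with rfl | rfl | rfl | rfl | rfl | rfl <;> ext <;>
    simp only [mem_insert, mem_singleton] <;> tauto

/-- A three-element set has six orderings, hence at least `t` for every `t ≤ 6`. -/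
lemma exists_orderings {V e : Finset ℕ} (he : e ⊆ V) (hcard : #e = 3) {t : ℕ} (ht : t ≤ 6) :
    ∃ T : Finset ({v // v ∈ V} × {v // v ∈ V} × {v // v ∈ V}),
      (∀ p ∈ T, ({p.1.1, p.2.1.1, p.2.2.1} : Finset ℕ) = e) ∧ #T = t := by
  obtain ⟨a, b, c, hab, hac, hbc, rfl⟩ := card_eq_three.1 hcard
  obtain ⟨A, hA⟩ : ∃ A : {v // v ∈ V}, A.1 = a := ⟨⟨a, he (by simp)⟩, rfl⟩
  obtain ⟨B, hB⟩ : ∃ B : {v // v ∈ V}, B.1 = b := ⟨⟨b, he (by simp)⟩, rfl⟩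
  obtain ⟨D, hD⟩ : ∃ D : {v // v ∈ V}, D.1 = c := ⟨⟨c, he (by simp)⟩, rfl⟩
  subst hA hB hD
  have h6 := card_six_orderings (fun h => hab (congrArg Subtype.val h))
    (fun h => hac (congrArg Subtype.val h)) (fun h : B = D => hbc (congrArg Subtype.val h))
  obtain ⟨T, hT, hTt⟩ := exists_subset_card_eq (ht.trans h6.ge)
  refine ⟨T, fun p hp => ?_, hTt⟩
  exact image_of_mem_orderings (fun v => v.1) (hT hp)

lemma prod_ordering {e : Finset ℕ} (hcard : #e = 3) {u v w : ℕ} (h : ({u, v, w} : Finset ℕ) = e)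
    (X : ℕ → ℝ) : ∏ i ∈ e, X i = X u * X v * X w := by
  subst h
  have huv : u ≠ v := by
    rintro rfl
    have := card_le_two (a := u) (b := w)
    simp at hcard
    omega
  have huw : u ≠ w := by
    rintro rfl
    have := card_le_two (a := v) (b := u)
    rw [insert_eq_of_mem (by simp)] at hcard
    omega
  have hvw : v ≠ w := by
    rintro rfl
    have := card_le_two (a := u) (b := v)
    simp at hcard
    omega
  rw [prod_insert (by simp [huv, huw]), prod_insert (by simp [hvw]), prod_singleton, mul_assoc]

/-- Keeping `t` of the six orderings of each edge of `F` gives a palette on the vertex set of `F`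
whose polynomial is `t / 6` times the Lagrange polynomial of `F`. -/
lemma exists_palette (F : ThreeGraph) {t : ℕ} (ht : t ≤ 6) :
    ∃ P : Finset ({v // v ∈ F.verts} × {v // v ∈ F.verts} × {v // v ∈ F.verts}),
      ∀ X : ℕ → ℝ, lamPal P (fun v => X v) = (t / 6 : ℝ) * lagrangePoly F X := by
  have hex := fun (e : Finset ℕ) (he : e ∈ F.edges) =>
    exists_orderings (F.edge_sub e he) (F.edge_card e he) ht
  choose! T hT hTt using hex
  refine ⟨F.edges.biUnion T, fun X => ?_⟩
  rw [lamPal, sum_biUnion]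
  · rw [lagrangePoly, ← mul_assoc, mul_sum]
    refine sum_congr rfl fun e he => ?_
    have : ∀ p ∈ T e, X p.1 * X p.2.1 * X p.2.2 = ∏ i ∈ e, X i := fun p hp =>
      (prod_ordering (F.edge_card e he) (hT e he p hp) X).symm
    rw [sum_congr rfl this, sum_const, nsmul_eq_mul, hTt e he]
    ring
  · intro e he e' he' hne
    rw [Function.onFun, disjoint_left]
    intro p hp hp'
    exact hne ((hT e he p hp).symm.trans (hT e' he' p hp'))

/-- A graph without vertices has Lagrangian `sSup ∅ = 0`, realised by the empty palette. -/
lemma exists_family_of_verts_eq_empty {F : ThreeGraph} (hF : F.verts = ∅) :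
    lagrangian F = 0 ∧ ∃ 𝓕 : Set ThreeGraph, piVVV 𝓕 = 0 := by
  refine ⟨by simp [lagrangian, hF], {G | ¬ Sat (∅ : Finset (Unit × Unit × Unit)) G}, ?_⟩
  rw [piVVV_palette (x := fun _ => 1) ∅ (by simp) (by simp) (by simp [lamPal])]
  simp [lamPal]

/-- For every integer 1 ≤ t ≤ 6 and every 3-graph F, (t/6)·Λ_F is a
uniform Turán density of some family of 3-graphs. -/
theorem scaled_lagrangian_mem_PiVVV (t : ℕ) (ht1 : 1 ≤ t) (ht6 : t ≤ 6)
    (F : ThreeGraph) :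
    ∃ 𝓕 : Set ThreeGraph, piVVV 𝓕 = (t : ℝ) / 6 * lagrangian F := by
  rcases F.verts.eq_empty_or_nonempty with hF | ⟨v₀, hv₀⟩
  · obtain ⟨h0, 𝓕, h𝓕⟩ := exists_family_of_verts_eq_empty hF
    exact ⟨𝓕, by rw [h0, h𝓕, mul_zero]⟩
  obtain ⟨P, hP⟩ := exists_palette F ht6
  have hcont : Continuous fun y : {v // v ∈ F.verts} → ℝ => lamPal P y := by
    unfold lamPal
    fun_prop
  obtain ⟨x, hx, hxmax⟩ := (isCompact_stdSimplex ℝ {v // v ∈ F.verts}).exists_isMaxOn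
    ⟨_, single_mem_stdSimplex ℝ (⟨v₀, hv₀⟩ : {v // v ∈ F.verts})⟩ hcont.continuousOn
  have hmax : ∀ y : {v // v ∈ F.verts} → ℝ, (∀ a, 0 ≤ y a) → ∑ a, y a = 1 →
      lamPal P y ≤ lamPal P x := fun y hy0 hy1 => hxmax ⟨hy0, hy1⟩
  refine ⟨{G | ¬ Sat P G}, ?_⟩
  rw [piVVV_palette P hx.1 hx.2 hmax]
  -- extend the maximiser by zero outside the vertex set
  set X : ℕ → ℝ := fun v => if h : v ∈ F.verts then x ⟨v, h⟩ else 0 with hX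
  have hxX : x = fun v : {v // v ∈ F.verts} => X v := by
    funext v
    simp [hX]
  have hX0 : ∀ v ∈ F.verts, 0 ≤ X v := fun v hv => by
    simp only [hX, dif_pos hv]
    exact hx.1 _
  have hX1 : ∑ v ∈ F.verts, X v = 1 := by
    rw [← sum_coe_sort, ← hx.2, hxX]
  have hgreat : lagrangian F = lagrangePoly F X := by
    refine IsGreatest.csSup_eq ⟨⟨X, fun v hv => ⟨hX0 v hv, ?_⟩, hX1, rfl⟩, ?_⟩
    · exact hX1 ▸ single_le_sum hX0 hv
    · rintro _ ⟨Y, hY, hY1, rfl⟩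
      have := hmax (fun v => Y v) (fun v => (hY v v.2).1) ((sum_coe_sort F.verts Y).trans hY1)
      rw [hxX, hP, hP] at this
      exact le_of_mul_le_mul_left this (by positivity)
  rw [hgreat, ← hP, ← hxX]
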